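/- arXiv:2104.06302 — 2 statements merged into one kernel-verified Lean document; each statement's English description precedes it below -/
import Mathlib

section
/- Let ω>0, let b=(b₁,b₂)∈ℝ²×ℝ² be such that the pair (J₂(ω),b) is controllable, and let σ be a saturation function. Then there exists a vector K∈ℝ⁴ such that the closed-loop system ẋ = J₂(ω)x − b·σ(Kᵀx) is globally asymptotically stable with respect to the origin. -/
open Real Filter MeasureTheory intervalIntegral RealInnerProductSpace

noncomputable section

/-- A saturation function: odd, globally Lipschitz, sign-definite, with finite positive limits
of `σ` at `+∞` and of `σ ξ / ξ` at `0`, non-decreasing, differentiable on `(0,∞)` with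
non-increasing derivative there. -/
def IsSaturation (σ : ℝ → ℝ) : Prop :=
  (∀ ξ, σ (-ξ) = -σ ξ) ∧
  (∃ L : NNReal, LipschitzWith L σ) ∧
  (∀ ξ : ℝ, ξ ≠ 0 → σ ξ * ξ > 0) ∧
  (∃ l > 0, Tendsto σ atTop (nhds l)) ∧
  (∃ l > 0, Tendsto (fun ξ => σ ξ / ξ) (nhdsWithin 0 {(0:ℝ)}ᶜ) (nhds l)) ∧
  Monotone σ ∧
  DifferentiableOn ℝ σ (Set.Ioi 0) ∧
  AntitoneOn (deriv σ) (Set.Ioi 0)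

/-- `J₂(ω)`, the 4×4 matrix `[[ωA₀, I₂],[0₂, ωA₀]]` with `A₀ = [[0,-1],[1,0]]`. -/
def J2mat (ω : ℝ) : Matrix (Fin 4) (Fin 4) ℝ :=
  !![0, -ω, 1, 0; ω, 0, 0, 1; 0, 0, 0, -ω; 0, 0, ω, 0]

/-- `(A, b)` is controllable: `(b, Ab, A²b, A³b)` spans `ℝ⁴`. -/
def Controllable (A : Matrix (Fin 4) (Fin 4) ℝ) (b : Fin 4 → ℝ) : Prop :=
  Submodule.span ℝ {b, A.mulVec b, (A * A).mulVec b, (A * A * A).mulVec b} = ⊤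

/-- Global asymptotic stability with respect to the origin of the (possibly time-varying)
system `ẋ = F t x` on `ℝ⁴`: Lyapunov stability uniform in the initial time, plus global
attractivity. -/
def IsGAS (F : ℝ → (Fin 4 → ℝ) → (Fin 4 → ℝ)) : Prop :=
  (∀ δ > 0, ∃ η > 0, ∀ t₀ : ℝ, 0 ≤ t₀ → ∀ x : ℝ → Fin 4 → ℝ,
      (∀ t, t₀ ≤ t → HasDerivAt x (F t (x t)) t) → ‖x t₀‖ ≤ η →
      ∀ t, t₀ ≤ t → ‖x t‖ ≤ δ) ∧
  (∀ t₀ : ℝ, 0 ≤ t₀ → ∀ x : ℝ → Fin 4 → ℝ,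
      (∀ t, t₀ ≤ t → HasDerivAt x (F t (x t)) t) →
      Tendsto x atTop (nhds 0))

/-- The properties of a saturation function that the proof uses. -/
structure Sat (σ : ℝ → ℝ) (L : ℝ) : Prop where
  odd : ∀ x, σ (-x) = -σ x
  mono : Monotone σ
  Lpos : 0 < L
  lip : ∀ x y, |σ x - σ y| ≤ L * |x - y|
  pos : ∀ x, 0 < x → 0 < σ x
  star : ∀ l r, 0 ≤ l → l ≤ 1 → 0 ≤ r → l * σ r ≤ σ (l * r)

namespace Sat
variable {σ : ℝ → ℝ} {L : ℝ}

lemma zero (h : Sat σ L) : σ 0 = 0 := by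
  have := h.odd 0
  simp at this; linarith

lemma cont (h : Sat σ L) : Continuous σ := by
  have : LipschitzWith L.toNNReal σ := by
    apply LipschitzWith.of_dist_le_mul
    intro x y
    rw [Real.dist_eq, Real.dist_eq, Real.coe_toNNReal _ h.Lpos.le]
    exact h.lip x y
  exact this.continuous

lemma nonneg (h : Sat σ L) {x : ℝ} (hx : 0 ≤ x) : 0 ≤ σ x := by
  rw [← h.zero]; exact h.mono hx

lemma abs_eq (h : Sat σ L) (x : ℝ) : |σ x| = σ |x| := by
  rcases le_total 0 x with hx | hx
  · rw [abs_of_nonneg hx, abs_of_nonneg (h.nonneg hx)]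
  · have h1 : σ x ≤ 0 := by rw [← h.zero]; exact h.mono hx
    rw [abs_of_nonpos hx, abs_of_nonpos h1, h.odd]

lemma two (h : Sat σ L) {r : ℝ} (hr : 0 ≤ r) : σ (2 * r) ≤ 2 * σ r := by
  have := h.star (1/2) (2*r) (by norm_num) (by norm_num) (by linarith)
  rw [show (1/2 : ℝ) * (2 * r) = r by ring] at this
  linarith

end Sat

/-- primitive of `σ` -/
def prim (σ : ℝ → ℝ) (x : ℝ) : ℝ := ∫ y in (0:ℝ)..x, σ y

lemma max_of_deriv {g g' : ℝ → ℝ} (hg : ∀ x, HasDerivAt g (g' x) x) (a : ℝ)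
    (h : ∀ x, g' x * (x - a) ≤ 0) (x : ℝ) : g x ≤ g a := by
  rcases lt_trichotomy x a with hx | hx | hx
  · obtain ⟨c, hc, hc'⟩ := exists_hasDerivAt_eq_slope g g' hx
      (fun y _ => (hg y).continuousAt.continuousWithinAt) (fun y _ => hg y)
    have h1 := h c
    have h2 : 0 ≤ g' c := by nlinarith [hc.2]
    rw [hc', le_div_iff₀ (by linarith)] at h2
    linarith
  · rw [hx]
  · obtain ⟨c, hc, hc'⟩ := exists_hasDerivAt_eq_slope g g' hx
      (fun y _ => (hg y).continuousAt.continuousWithinAt) (fun y _ => hg y)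
    have h1 := h c
    have h2 : g' c ≤ 0 := by nlinarith [hc.1]
    rw [hc', div_le_iff₀ (by linarith)] at h2
    linarith

namespace Sat
variable {σ : ℝ → ℝ} {L : ℝ}

lemma prim_deriv (h : Sat σ L) (x : ℝ) : HasDerivAt (prim σ) (σ x) x :=
  intervalIntegral.integral_hasDerivAt_right (h.cont.intervalIntegrable _ _)
    h.cont.aestronglyMeasurable.stronglyMeasurableAtFilter h.cont.continuousAt

lemma prim_cont (h : Sat σ L) : Continuous (prim σ) :=
  continuous_iff_continuousAt.2 fun x => (h.prim_deriv x).continuousAt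

lemma prim_zero : prim σ 0 = 0 := by simp [prim]

lemma prim_convex (h : Sat σ L) (a b : ℝ) : prim σ b - prim σ a ≤ σ b * (b - a) := by
  have := max_of_deriv (g := fun x => -(prim σ x - σ b * x)) (g' := fun x => -(σ x - σ b))
    (fun x => by
      exact (((h.prim_deriv x).sub ((hasDerivAt_id x).const_mul (σ b))).neg).congr_deriv (by simp)) b
    (fun x => by
      rcases le_total x b with hx | hx
      · have := h.mono hx; nlinarith
      · have := h.mono hx; nlinarith) a
  linarith

lemma prim_descent (h : Sat σ L) (a x : ℝ) :
    prim σ x - prim σ a ≤ σ a * (x - a) + L / 2 * (x - a) ^ 2 := by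
  have := max_of_deriv (g := fun x => (prim σ x - σ a * x) - L / 2 * (x - a) ^ 2)
    (g' := fun x => (σ x - σ a) - L * (x - a))
    (fun x => by
      have h1 : HasDerivAt (fun x => L / 2 * (x - a) ^ 2) (L * (x - a)) x := by
        have := ((((hasDerivAt_id x).sub_const a).pow 2).const_mul (L/2))
        refine this.congr_deriv ?_
        simp only [id]; push_cast; ring
      exact (((h.prim_deriv x).sub ((hasDerivAt_id x).const_mul (σ a))).sub h1).congr_deriv (by simp)) a
    (fun x => by
      have hl := h.lip x a
      rcases le_total x a with hx | hx
      · rw [abs_of_nonpos (by linarith : x - a ≤ 0)] at hl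
        have := (abs_le.1 hl).1
        nlinarith
      · rw [abs_of_nonneg (by linarith : 0 ≤ x - a)] at hl
        have := (abs_le.1 hl).2
        nlinarith) x
  nlinarith

lemma prim_strong (h : Sat σ L) (a b : ℝ) :
    prim σ b - prim σ a ≤ σ b * (b - a) - (σ b - σ a) ^ 2 / (2 * L) := by
  have hL := h.Lpos
  have h1 := h.prim_descent a (a + (σ b - σ a) / L)
  have h2 := h.prim_convex (a + (σ b - σ a) / L) b
  have h3 : σ a * ((σ b - σ a) / L) + L / 2 * ((σ b - σ a) / L) ^ 2 - σ b * ((σ b - σ a) / L)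
      = - (σ b - σ a) ^ 2 / (2 * L) := by
    field_simp; ring
  have h4 : - (σ b - σ a) ^ 2 / (2 * L) = -((σ b - σ a) ^ 2 / (2 * L)) := by ring
  have h5 : a + (σ b - σ a) / L - a = (σ b - σ a) / L := by ring
  rw [h5] at h1
  nlinarith

lemma prim_nonneg (h : Sat σ L) (x : ℝ) : 0 ≤ prim σ x := by
  have := h.prim_convex x 0
  rw [h.zero, prim_zero] at this
  linarith

lemma prim_le (h : Sat σ L) (x : ℝ) : prim σ x ≤ L * x ^ 2 := by
  have := h.prim_descent 0 x
  rw [h.zero, prim_zero] at this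
  nlinarith [mul_nonneg h.Lpos.le (sq_nonneg x)]

end Sat

/-- rotating phase -/
def E (ω t : ℝ) : ℂ := Complex.exp ((ω * t : ℝ) * Complex.I)

lemma E_norm (ω t : ℝ) : ‖E ω t‖ = 1 := Complex.norm_exp_ofReal_mul_I _

lemma E_deriv (ω t : ℝ) : HasDerivAt (E ω) (ω * Complex.I * E ω t) t := by
  have h1 : HasDerivAt (fun t : ℝ => ((ω * t : ℝ) : ℂ) * Complex.I) (ω * Complex.I) t := by
    have h0 : HasDerivAt (fun t : ℝ => ω * t) ω t := by
      simpa using (hasDerivAt_id t).const_mul ω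
    exact h0.ofReal_comp.mul_const _
  have := h1.cexp
  refine this.congr_deriv ?_
  unfold E
  rw [mul_comm]

lemma E_cont (ω : ℝ) : Continuous (E ω) :=
  continuous_iff_continuousAt.2 fun x => (E_deriv ω x).continuousAt

lemma E_per {ω T : ℝ} (hT : ω * T = 2 * π) (t : ℝ) : E ω (t - T) = E ω t := by
  unfold E
  rw [show ω * (t - T) = ω * t - 2 * π by rw [mul_sub, hT]]
  push_cast
  rw [sub_mul, Complex.exp_sub, Complex.exp_two_pi_mul_I, div_one]

def zeta (ω κ : ℝ) (w1 w2 : ℝ → ℂ) (t : ℝ) : ℝ :=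
  (E ω t * ((κ : ℂ) ^ 2 * w1 t + κ * w2 t)).re

/-- A solution, in rotating coordinates. -/
structure Sol (σ : ℝ → ℝ) (ω κ t₀ : ℝ) (w1 w2 : ℝ → ℂ) : Prop where
  c1 : Continuous w1
  c2 : Continuous w2
  d1 : ∀ t, t₀ < t → HasDerivAt w1 (w2 t) t
  d2 : ∀ t, t₀ < t → HasDerivAt w2
    (-((σ (zeta ω κ w1 w2 t) : ℝ) : ℂ) * (starRingEnd ℂ) (E ω t)) t

lemma Sol.zcont {σ ω κ t₀ w1 w2} (h : Sol σ ω κ t₀ w1 w2) : Continuous (zeta ω κ w1 w2) := by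
  have := h.c1; have := h.c2; have := E_cont ω
  unfold zeta
  fun_prop

def VV (σ : ℝ → ℝ) (ω κ T : ℝ) (w1 w2 : ℝ → ℂ) (t : ℝ) : ℝ :=
  κ ^ 2 / 2 * ‖w2 t‖ ^ 2 + 1 / T * ∫ s in (t - T)..t, prim σ (zeta ω κ w1 w2 s)

lemma HasDerivAt.re' {f : ℝ → ℂ} {f' : ℂ} {t : ℝ} (h : HasDerivAt f f' t) :
    HasDerivAt (fun t => (f t).re) f'.re t :=
  (Complex.reCLM.hasFDerivAt.comp_hasDerivAt t h)

lemma HasDerivAt.ip {f : ℝ → ℂ} {f' : ℂ} {t : ℝ} (h : HasDerivAt f f' t) (Q : ℂ) :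
    HasDerivAt (fun t => ((starRingEnd ℂ) (f t) * Q).re) ((starRingEnd ℂ) f' * Q).re t := by
  apply HasDerivAt.re'
  exact (h.star).mul_const Q

lemma HasDerivAt.nsq {f : ℝ → ℂ} {f' : ℂ} {t : ℝ} (h : HasDerivAt f f' t) :
    HasDerivAt (fun t => ‖f t‖ ^ 2) (2 * ((starRingEnd ℂ) f' * f t).re) t := by
  convert h.norm_sq using 1
  simp [Complex.inner]

lemma VV_cont {σ L ω κ t₀ w1 w2} (T : ℝ) (hs : Sat σ L) (h : Sol σ ω κ t₀ w1 w2) :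
    Continuous (VV σ ω κ T w1 w2) := by
  have hp : Continuous (fun s => prim σ (zeta ω κ w1 w2 s)) := hs.prim_cont.comp h.zcont
  have h2 := h.c2
  have : Continuous fun t : ℝ => ∫ s in (t - T)..t, prim σ (zeta ω κ w1 w2 s) := by
    have e : (fun t : ℝ => ∫ s in (t - T)..t, prim σ (zeta ω κ w1 w2 s)) =
      fun t : ℝ => (∫ s in 0..t, prim σ (zeta ω κ w1 w2 s)) -
        ∫ s in 0..(t-T), prim σ (zeta ω κ w1 w2 s) := by
      funext t
      rw [intervalIntegral.integral_interval_sub_left] <;> exact hp.intervalIntegrable _ _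
    rw [e]
    have hc : Continuous fun t : ℝ => ∫ s in 0..t, prim σ (zeta ω κ w1 w2 s) :=
      intervalIntegral.continuous_primitive (fun a b => hp.intervalIntegrable a b) 0
    exact hc.sub (hc.comp (continuous_id.sub continuous_const))
  unfold VV
  fun_prop

lemma VV_deriv {σ L ω κ t₀ w1 w2} (T : ℝ) (hs : Sat σ L) (h : Sol σ ω κ t₀ w1 w2)
    (t : ℝ) (ht : t₀ < t) :
    HasDerivAt (VV σ ω κ T w1 w2)
      (-κ ^ 2 * σ (zeta ω κ w1 w2 t) * (E ω t * w2 t).re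
        + 1 / T * (prim σ (zeta ω κ w1 w2 t) - prim σ (zeta ω κ w1 w2 (t - T)))) t := by
  have hp : Continuous (fun s => prim σ (zeta ω κ w1 w2 s)) := hs.prim_cont.comp h.zcont
  have e : (fun t : ℝ => ∫ s in (t - T)..t, prim σ (zeta ω κ w1 w2 s)) =
      fun t : ℝ => (∫ s in 0..t, prim σ (zeta ω κ w1 w2 s)) -
        ∫ s in 0..(t-T), prim σ (zeta ω κ w1 w2 s) := by
    funext t
    rw [intervalIntegral.integral_interval_sub_left] <;> exact hp.intervalIntegrable _ _
  have hd : ∀ t, HasDerivAt (fun t : ℝ => ∫ s in 0..t, prim σ (zeta ω κ w1 w2 s))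
      (prim σ (zeta ω κ w1 w2 t)) t := fun t =>
    intervalIntegral.integral_hasDerivAt_right (hp.intervalIntegrable _ _)
      hp.aestronglyMeasurable.stronglyMeasurableAtFilter hp.continuousAt
  have hd2 : HasDerivAt (fun t : ℝ => ∫ s in (t - T)..t, prim σ (zeta ω κ w1 w2 s))
      (prim σ (zeta ω κ w1 w2 t) - prim σ (zeta ω κ w1 w2 (t - T))) t := by
    rw [e]
    refine (hd t).sub ?_
    have h3 := (hd (t - T)).comp t ((hasDerivAt_id t).sub_const T)
    rw [mul_one] at h3
    exact h3
  have := (((h.d2 t ht).nsq).const_mul (κ ^ 2 / 2)).add (hd2.const_mul (1 / T))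
  refine this.congr_deriv ?_
  congr 1
  simp
  ring

lemma re_E_mul_le (ω t : ℝ) (z : ℂ) : |(E ω t * z).re| ≤ ‖z‖ := by
  have := Complex.abs_re_le_norm (E ω t * z)
  rwa [norm_mul, E_norm, one_mul] at this

/-- `w2` varies at speed at most `M`. -/
lemma w2_var {σ ω κ t₀ w1 w2} (h : Sol σ ω κ t₀ w1 w2) {a b M : ℝ} (ha : t₀ ≤ a)
    (hM : ∀ s ∈ Set.Icc a b, |σ (zeta ω κ w1 w2 s)| ≤ M) :
    ∀ s ∈ Set.Icc a b, ∀ s' ∈ Set.Icc a b, ‖w2 s - w2 s'‖ ≤ M * |s - s'| := by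
  have key : ∀ s ∈ Set.Icc a b, ∀ s' ∈ Set.Icc a b, s' ≤ s → ‖w2 s - w2 s'‖ ≤ M * |s - s'| := by
    intro s hs s' hs' hle
    rcases hle.eq_or_lt with rfl | hlt
    · simp
    rw [abs_of_pos (by linarith)]
    have hc : Tendsto (fun x => M * (s - x)) (nhdsWithin s' (Set.Ioi s')) (nhds (M * (s - s'))) :=
      ((by fun_prop : Continuous fun x => M * (s - x)).tendsto s').mono_left nhdsWithin_le_nhds
    have hc2 : Tendsto (fun x => ‖w2 s - w2 x‖) (nhdsWithin s' (Set.Ioi s'))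
        (nhds (‖w2 s - w2 s'‖)) := by
      have := h.c2
      exact ((by fun_prop : Continuous fun x => ‖w2 s - w2 x‖).tendsto s').mono_left
        nhdsWithin_le_nhds
    refine le_of_tendsto_of_tendsto hc2 hc ?_
    have : Set.Ioo s' s ∈ nhdsWithin s' (Set.Ioi s') := Ioo_mem_nhdsGT hlt
    filter_upwards [this] with x hx
    refine norm_image_sub_le_of_norm_deriv_le_segment' (f := w2) (a := x) (b := s)
      (fun y hy => (h.d2 y (by linarith [hs'.1, hx.1, hy.1])).hasDerivWithinAt) ?_ s
      ⟨hx.2.le, le_rfl⟩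
    intro y hy
    rw [norm_mul, norm_neg, RCLike.norm_conj, E_norm, mul_one, Complex.norm_real]
    exact hM y ⟨by linarith [hs'.1, hx.1, hy.1], by linarith [hy.2, hs.2]⟩
  intro s hs s' hs'
  rcases le_total s' s with hle | hle
  · exact key s hs s' hs' hle
  · rw [norm_sub_rev, abs_sub_comm]; exact key s' hs' s hs hle

/-- `w1` is almost affine. -/
lemma w1_var {σ ω κ t₀ w1 w2} (h : Sol σ ω κ t₀ w1 w2) {a b M : ℝ} (ha : t₀ < a)
    (hM : ∀ s ∈ Set.Icc a b, |σ (zeta ω κ w1 w2 s)| ≤ M)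
    (s t : ℝ) (hs : s ∈ Set.Icc a b) (ht : t ∈ Set.Icc a b) (d : ℝ) (hd : b - a ≤ d) :
    ‖w1 t - w1 s - ((t - s : ℝ) : ℂ) * w2 t‖ ≤ M * d * |t - s| := by
  have hM0 : 0 ≤ M := (abs_nonneg _).trans (hM s hs)
  have := Convex.norm_image_sub_le_of_norm_hasDerivWithin_le (𝕜 := ℝ)
    (f := fun x => w1 x - (x : ℂ) * w2 t) (f' := fun x => w2 x - w2 t) (s := Set.Icc a b)
    (C := M * d) (x := s) (y := t) ?_ ?_ (convex_Icc a b) hs ht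
  · rw [Real.norm_eq_abs] at this
    refine le_trans (le_of_eq ?_) this
    congr 1
    push_cast; ring
  · intro x hx
    have h1 : HasDerivAt (fun x : ℝ => (x : ℂ) * w2 t) (w2 t) x := by
      have := ((hasDerivAt_id x).ofReal_comp).mul_const (w2 t)
      simpa using this
    exact ((h.d1 x (by linarith [hx.1])).sub h1).hasDerivWithinAt
  · intro x hx
    refine (w2_var h ha.le hM x hx t ht).trans ?_
    refine mul_le_mul_of_nonneg_left ?_ hM0
    rw [abs_le]; constructor <;> linarith [hx.1, hx.2, ht.1, ht.2]

lemma zeta_diff {ω κ T : ℝ} (hT : ω * T = 2 * π) (w1 w2 : ℝ → ℂ) (s : ℝ) :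
    zeta ω κ w1 w2 s - zeta ω κ w1 w2 (s - T) =
      κ ^ 2 * (E ω s * (w1 s - w1 (s - T) - (T : ℂ) * w2 s)).re + κ ^ 2 * T * (E ω s * w2 s).re
      - κ * (E ω s * (w2 (s - T) - w2 s)).re := by
  unfold zeta
  rw [E_per hT, ← Complex.ofReal_pow]
  simp only [Complex.mul_re, Complex.add_re, Complex.sub_re, Complex.add_im, Complex.sub_im,
    Complex.mul_im, Complex.ofReal_re, Complex.ofReal_im]
  ring

lemma window {σ L ω κ T t₀ w1 w2} (hs : Sat σ L) (hκ : 0 < κ) (hT0 : 0 < T)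
    (hT : ω * T = 2 * π) (h : Sol σ ω κ t₀ w1 w2) (τ M : ℝ) (hτ : t₀ < τ - 2 * T)
    (hM : ∀ s ∈ Set.Icc (τ - 2 * T) τ, |σ (zeta ω κ w1 w2 s)| ≤ M) :
    VV σ ω κ T w1 w2 τ ≤ VV σ ω κ T w1 w2 (τ - T) - κ / T * ‖w2 (τ - T) - w2 τ‖ ^ 2
      + κ ^ 2 * (T ^ 2 + L * T ^ 2 / 2) * M ^ 2 := by
  have hL := hs.Lpos
  have hM0 : 0 ≤ M := (abs_nonneg _).trans (hM τ ⟨by linarith, le_rfl⟩)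
  set u : ℝ → ℝ := fun s => σ (zeta ω κ w1 w2 s) with hu
  have huc : Continuous u := hs.cont.comp h.zcont
  set D : ℝ → ℝ := fun s => u s - u (s - T) with hD
  have hDc : Continuous D := by fun_prop
  set Q : ℂ := w2 (τ - T) - w2 τ with hQ
  set I : ℝ := ∫ s in (τ - T)..τ, |D s| with hI
  -- variation of q
  have hq : ∀ s ∈ Set.Ioo (τ - T) τ, ‖Q - (w2 (s - T) - w2 s)‖ ≤ I := by
    intro s hs'
    have hEc := E_cont ω
    have hc2 := h.c2
    have hder : ∀ x ∈ Set.Ioo s τ, HasDerivAt (fun x => w2 (x - T) - w2 x)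
        ((D x : ℂ) * (starRingEnd ℂ) (E ω x)) x := by
      intro x hx
      have h1 := (h.d2 (x - T) (by linarith [hx.1, hs'.1])).comp_sub_const x T
      have h2 := h.d2 x (by linarith [hx.1, hs'.1])
      refine (h1.sub h2).congr_deriv ?_
      rw [E_per hT]
      simp only [hD, hu]
      push_cast; ring
    have hInt0 := intervalIntegral.integral_eq_sub_of_hasDerivAt_of_le hs'.2.le
      (f := fun x => w2 (x - T) - w2 x)
      (f' := fun x => (D x : ℂ) * (starRingEnd ℂ) (E ω x))
      (by fun_prop) hder
      (Continuous.intervalIntegrable (by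
        have : Continuous fun x => (starRingEnd ℂ) (E ω x) := Complex.continuous_conj.comp hEc
        fun_prop) _ _)
    rw [hQ, ← hInt0]
    refine (intervalIntegral.norm_integral_le_integral_norm hs'.2.le).trans ?_
    have e : ∀ x, ‖(D x : ℂ) * (starRingEnd ℂ) (E ω x)‖ = |D x| := by
      intro x
      rw [norm_mul, RCLike.norm_conj, E_norm, mul_one, Complex.norm_real, Real.norm_eq_abs]
    simp only [e]
    rw [hI]
    have hadd := intervalIntegral.integral_add_adjacent_intervals
      (hDc.abs.intervalIntegrable (μ := volume) (τ - T) s) (hDc.abs.intervalIntegrable s τ)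
    have hnn : 0 ≤ ∫ x in (τ - T)..s, |D x| :=
      intervalIntegral.integral_nonneg hs'.1.le (fun x _ => abs_nonneg _)
    linarith
  -- the pointwise bound
  set B : ℝ := κ ^ 2 * M ^ 2 * T + κ / T * M * I with hB
  have hpt : ∀ s ∈ Set.Ioo (τ - T) τ,
      (-κ ^ 2 * u s * (E ω s * w2 s).re
        + 1 / T * (prim σ (zeta ω κ w1 w2 s) - prim σ (zeta ω κ w1 w2 (s - T))))
      + κ / T * (u s * (E ω s * Q).re) - B + 1 / (2 * L * T) * (D s) ^ 2 ≤ 0 := by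
    intro s hs'
    have husM : |u s| ≤ M := hM s ⟨by linarith [hs'.1], hs'.2.le⟩
    have h1 := hs.prim_strong (zeta ω κ w1 w2 (s - T)) (zeta ω κ w1 w2 s)
    rw [zeta_diff hT] at h1
    have h2 := w1_var h (a := s - T) (b := s) (M := M) (by linarith [hs'.1])
      (fun x hx => hM x ⟨by linarith [hx.1, hs'.1], by linarith [hx.2, hs'.2]⟩) (s - T) s
      ⟨le_rfl, by linarith⟩ ⟨by linarith, le_rfl⟩ T (by linarith)
    rw [show s - (s - T) = T by ring, abs_of_pos hT0] at h2
    have h3 := (re_E_mul_le ω s (w1 s - w1 (s - T) - (T : ℂ) * w2 s)).trans h2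
    have h4 := (re_E_mul_le ω s (Q - (w2 (s - T) - w2 s))).trans (hq s hs')
    set X := (E ω s * (w1 s - w1 (s - T) - (T : ℂ) * w2 s)).re
    have hX : u s * X ≤ M * (M * T * T) := by
      refine (le_abs_self _).trans ?_
      rw [abs_mul]
      exact mul_le_mul husM h3 (abs_nonneg _) hM0
    have e1 : (E ω s * (Q - (w2 (s - T) - w2 s))).re
        = (E ω s * Q).re - (E ω s * (w2 (s - T) - w2 s)).re := by
      rw [mul_sub, Complex.sub_re]
    rw [e1] at h4
    set Y := (E ω s * (w2 (s - T) - w2 s)).re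
    set Z := (E ω s * Q).re
    have hY : u s * (Z - Y) ≤ M * I := by
      refine (le_abs_self _).trans ?_
      rw [abs_mul]
      exact mul_le_mul husM h4 (abs_nonneg _) hM0
    set W := (E ω s * w2 s).re
    change prim σ (zeta ω κ w1 w2 s) - prim σ (zeta ω κ w1 w2 (s - T)) ≤
      u s * (κ ^ 2 * X + κ ^ 2 * T * W - κ * Y) - (D s) ^ 2 / (2 * L) at h1
    have h5 : 1 / T * (prim σ (zeta ω κ w1 w2 s) - prim σ (zeta ω κ w1 w2 (s - T))) ≤
      1 / T * (u s * (κ ^ 2 * X + κ ^ 2 * T * W - κ * Y) - (D s) ^ 2 / (2 * L)) :=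
      mul_le_mul_of_nonneg_left h1 (by positivity)
    have h6 : 1 / T * (u s * (κ ^ 2 * X + κ ^ 2 * T * W - κ * Y) - (D s) ^ 2 / (2 * L))
      = κ ^ 2 / T * (u s * X) + κ ^ 2 * u s * W - κ / T * (u s * Y)
        - 1 / (2 * L * T) * (D s) ^ 2 := by
      field_simp
    have h7 : κ ^ 2 / T * (u s * X) ≤ κ ^ 2 / T * (M * (M * T * T)) :=
      mul_le_mul_of_nonneg_left hX (by positivity)
    have h8 : κ / T * (u s * (Z - Y)) ≤ κ / T * (M * I) :=
      mul_le_mul_of_nonneg_left hY (by positivity)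
    have h9 : κ ^ 2 / T * (M * (M * T * T)) = κ ^ 2 * M ^ 2 * T := by
      field_simp
    rw [hB]
    nlinarith
  -- monotonicity
  set H : ℝ → ℝ := fun s => VV σ ω κ T w1 w2 s - κ / T * ((starRingEnd ℂ) (w2 s) * Q).re - B * s
      + 1 / (2 * L * T) * ∫ x in (τ - T)..s, (D x) ^ 2 with hH
  have hanti : AntitoneOn H (Set.Icc (τ - T) τ) := by
    have hc2 := h.c2
    have hVc := VV_cont T hs h
    have hD2 : Continuous fun x => (D x) ^ 2 := by fun_prop
    have hDi : Continuous fun s => ∫ x in (τ - T)..s, (D x) ^ 2 :=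
      intervalIntegral.continuous_primitive (fun a b => hD2.intervalIntegrable a b) _
    refine antitoneOn_of_hasDerivWithinAt_nonpos (convex_Icc _ _) ?_ (f' := fun s =>
      (-κ ^ 2 * u s * (E ω s * w2 s).re
        + 1 / T * (prim σ (zeta ω κ w1 w2 s) - prim σ (zeta ω κ w1 w2 (s - T))))
      + κ / T * (u s * (E ω s * Q).re) - B + 1 / (2 * L * T) * (D s) ^ 2) ?_ ?_
    · have : Continuous fun s => ((starRingEnd ℂ) (w2 s) * Q).re :=
        Complex.continuous_re.comp ((Complex.continuous_conj.comp hc2).mul continuous_const)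
      apply Continuous.continuousOn
      fun_prop
    · intro s hs'
      rw [interior_Icc] at hs'
      have hst : t₀ < s := by linarith [hs'.1]
      have h1 := VV_deriv T hs h s hst
      have h2 := ((h.d2 s hst).ip Q).const_mul (κ / T)
      have h3 := (hasDerivAt_id s).const_mul B
      have h4 : HasDerivAt (fun s => ∫ x in (τ - T)..s, (D x) ^ 2) ((D s) ^ 2) s :=
        intervalIntegral.integral_hasDerivAt_right (hD2.intervalIntegrable _ _)
          hD2.aestronglyMeasurable.stronglyMeasurableAtFilter hD2.continuousAt
      refine (((h1.sub h2).sub h3).add (h4.const_mul (1 / (2 * L * T)))).hasDerivWithinAt.congr_deriv ?_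
      simp [hu]
      ring
    · intro s hs'
      rw [interior_Icc] at hs'
      exact hpt s hs'
  have hfin := hanti (a := τ - T) (b := τ) ⟨le_rfl, by linarith⟩ ⟨by linarith, le_rfl⟩ (by linarith)
  simp only [hH, intervalIntegral.integral_same] at hfin
  have hQQ : ((starRingEnd ℂ) (w2 (τ - T)) * Q).re - ((starRingEnd ℂ) (w2 τ) * Q).re = ‖Q‖ ^ 2 := by
    rw [← Complex.sub_re, ← sub_mul, ← map_sub, ← hQ, ← Complex.normSq_eq_norm_sq,
      ← Complex.normSq_eq_conj_mul_self, Complex.ofReal_re]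
  have hAM : κ * M * I - 1 / (2 * L * T) * ∫ x in (τ - T)..τ, (D x) ^ 2
      ≤ κ ^ 2 * M ^ 2 * L * T / 2 * T := by
    have i1 : IntervalIntegrable (fun x => κ * M * |D x|) volume (τ - T) τ :=
      Continuous.intervalIntegrable (by fun_prop) _ _
    have i2 : IntervalIntegrable (fun x => 1 / (2 * L * T) * (D x) ^ 2) volume (τ - T) τ :=
      Continuous.intervalIntegrable (by fun_prop) _ _
    rw [hI, ← intervalIntegral.integral_const_mul, ← intervalIntegral.integral_const_mul,
      ← intervalIntegral.integral_sub i1 i2]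
    have : ∫ x in (τ - T)..τ, (κ ^ 2 * M ^ 2 * L * T / 2 : ℝ) = κ ^ 2 * M ^ 2 * L * T / 2 * T := by
      rw [intervalIntegral.integral_const, smul_eq_mul]; ring
    rw [← this]
    refine intervalIntegral.integral_mono_on (by linarith) (i1.sub i2)
      (continuous_const.intervalIntegrable _ _) ?_
    intro x _
    have e : κ ^ 2 * M ^ 2 * L * T / 2 - (κ * M * |D x| - 1 / (2 * L * T) * (D x) ^ 2)
        = 1 / (2 * L * T) * (κ * M * L * T - |D x|) ^ 2 := by
      rw [← sq_abs (D x)]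
      field_simp
      ring
    have : 0 ≤ 1 / (2 * L * T) * (κ * M * L * T - |D x|) ^ 2 := by positivity
    linarith
  have hBT : B * τ - B * (τ - T) = κ ^ 2 * M ^ 2 * T ^ 2 + κ * M * I := by
    rw [hB]; field_simp; ring
  have hq2 : κ / T * ((starRingEnd ℂ) (w2 (τ - T)) * Q).re - κ / T * ((starRingEnd ℂ) (w2 τ) * Q).re
      = κ / T * ‖Q‖ ^ 2 := by
    rw [← hQQ]; ring
  nlinarith

lemma sat_prod {σ L} (hs : Sat σ L) {r C g : ℝ} (hr : 0 < r) (hC : |C| ≤ r)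
    (hg : |g - C| ≤ r / 32) : σ r * (C ^ 2 / 2 - r ^ 2 / 8) ≤ r * (σ g * C) := by
  have hσ := hs.pos r hr
  have hg' := abs_le.1 hg
  have hC' := abs_le.1 hC
  by_cases hc : |C| < r / 16
  · have hc' := abs_lt.1 hc
    have h1 : |σ g| ≤ σ r := by
      rw [hs.abs_eq]; apply hs.mono; rw [abs_le]; constructor <;> linarith
    have h2 : |σ g * C| ≤ σ r * (r / 16) := by
      rw [abs_mul]; exact mul_le_mul h1 hc.le (abs_nonneg _) hσ.le
    have h3 := (abs_le.1 h2).1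
    have h4 : C ^ 2 ≤ (r / 16) ^ 2 := sq_le_sq' (by linarith) hc'.2.le
    have h5 : σ r * (C ^ 2 / 2 - r ^ 2 / 8) ≤ σ r * (- (r ^ 2 / 16)) :=
      mul_le_mul_of_nonneg_left (by nlinarith) hσ.le
    nlinarith
  · push Not at hc
    have hst : σ r * (|C| / 2) ≤ r * σ (|C| / 2) := by
      have := hs.star (|C| / 2 / r) r (by positivity)
        (by rw [div_le_one hr]; linarith [abs_nonneg C]) hr.le
      rw [div_mul_cancel₀ _ hr.ne'] at this
      have h2 := mul_le_mul_of_nonneg_left this hr.le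
      have e : r * (|C| / 2 / r * σ r) = σ r * (|C| / 2) := by field_simp
      rw [e] at h2
      exact h2
    have hb : σ r * (C ^ 2 / 2 - r ^ 2 / 8) ≤ σ r * (C ^ 2 / 2) :=
      mul_le_mul_of_nonneg_left (by nlinarith) hσ.le
    refine hb.trans ?_
    rcases le_total 0 C with h0 | h0
    · rw [abs_of_nonneg h0] at hst hc
      have h1 : σ (C / 2) ≤ σ g := hs.mono (by linarith)
      have h2 : r * σ (C / 2) ≤ r * σ g := mul_le_mul_of_nonneg_left h1 hr.le
      have h3 : σ r * (C / 2) * C ≤ r * σ g * C := mul_le_mul_of_nonneg_right (by linarith) h0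
      linarith
    · rw [abs_of_nonpos h0] at hst hc
      have h1 : σ (-C / 2) ≤ σ (-g) := hs.mono (by linarith)
      rw [hs.odd] at h1
      have h2 : r * σ (-C / 2) ≤ r * -σ g := mul_le_mul_of_nonneg_left h1 hr.le
      have h3 : σ r * (-C / 2) * -C ≤ r * -σ g * -C :=
        mul_le_mul_of_nonneg_right (by linarith) (by linarith)
      linarith

lemma re_E_sq (ω s : ℝ) (p : ℂ) : (E ω s * p).re ^ 2 = (‖p‖ ^ 2 + (E ω s ^ 2 * p ^ 2).re) / 2 := by
  have h1 : ‖E ω s * p‖ ^ 2 = ‖p‖ ^ 2 := by rw [norm_mul, E_norm, one_mul]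
  rw [← mul_pow (E ω s) p, ← h1, ← Complex.normSq_eq_norm_sq]
  generalize E ω s * p = z
  rw [Complex.normSq_apply, pow_two z, Complex.mul_re]
  ring

lemma lowerQ {σ L ω κ T t₀ w1 w2} (hs : Sat σ L) (hω : 0 < ω) (hT0 : 0 < T)
    (hT : ω * T = 2 * π) (h : Sol σ ω κ t₀ w1 w2) (τ : ℝ) (hτ : t₀ < τ - T) (p0 : ℂ) (g : ℝ → ℝ)
    (h1 : ∀ s ∈ Set.Icc (τ - T) τ, |g s - (E ω s * p0).re| ≤ ‖p0‖ / 32)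
    (h2 : ∀ s ∈ Set.Icc (τ - T) τ, |σ (zeta ω κ w1 w2 s) - σ (g s)| ≤ σ ‖p0‖ / 16) :
    σ ‖p0‖ * T / 16 ≤ ‖w2 (τ - T) - w2 τ‖ := by
  set r := ‖p0‖ with hr
  rcases (norm_nonneg p0).eq_or_lt with h0 | hr0
  · rw [← hr] at h0; rw [← h0, hs.zero]; simp
  rw [← hr] at hr0
  set G : ℝ → ℝ := fun s => r * (-((starRingEnd ℂ) (w2 s) * p0).re)
    - σ r * ((r ^ 2 * s + (E ω s ^ 2 * (p0 ^ 2 / (2 * ω * Complex.I))).re) / 4 - 3 / 16 * r ^ 2 * s)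
    with hG
  have hmono : MonotoneOn G (Set.Icc (τ - T) τ) := by
    have hder : ∀ s ∈ Set.Icc (τ - T) τ, HasDerivAt G
      (r * (σ (zeta ω κ w1 w2 s) * (E ω s * p0).re)
        - σ r * ((E ω s * p0).re ^ 2 / 2 - 3 / 16 * r ^ 2)) s := by
      intro s hs'
      have a1 := (((h.d2 s (by linarith [hs'.1])).ip p0).neg).const_mul r
      have a2 := (((E_deriv ω s).pow 2).mul_const (p0 ^ 2 / (2 * ω * Complex.I))).re'
      have a3 := (hasDerivAt_id s).const_mul (r ^ 2)
      have a4 := (hasDerivAt_id s).const_mul (3 / 16 * r ^ 2)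
      have a5 := (((a3.add a2).div_const 4).sub a4).const_mul (σ r)
      refine (a1.sub a5).congr_deriv ?_
      have e : ((2 : ℕ) : ℂ) * E ω s ^ (2 - 1) * (ω * Complex.I * E ω s) * (p0 ^ 2 / (2 * ω * Complex.I))
          = E ω s ^ 2 * p0 ^ 2 := by
        have : (ω : ℂ) ≠ 0 := by exact_mod_cast hω.ne'
        have hI := Complex.I_ne_zero
        push_cast
        field_simp
      rw [e, re_E_sq, ← hr]
      simp
      ring
    refine monotoneOn_of_hasDerivWithinAt_nonneg (convex_Icc _ _)
      (fun s hs' => (hder s hs').continuousAt.continuousWithinAt)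
      (fun s hs' => (hder s (interior_subset hs')).hasDerivWithinAt) ?_
    intro s hs'
    have hs' := interior_subset hs'
    have hC := re_E_mul_le ω s p0
    have b1 := sat_prod hs hr0 hC (h1 s hs')
    have b2 : |(σ (zeta ω κ w1 w2 s) - σ (g s)) * (E ω s * p0).re| ≤ σ r / 16 * r := by
      rw [abs_mul]
      exact mul_le_mul (h2 s hs') hC (abs_nonneg _) (by linarith [hs.pos r hr0])
    have b3 := (abs_le.1 b2).1
    nlinarith
  have hfin := hmono (a := τ - T) (b := τ) ⟨le_rfl, by linarith⟩ ⟨by linarith, le_rfl⟩ (by linarith)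
  simp only [hG, E_per hT] at hfin
  set Q := w2 (τ - T) - w2 τ with hQ
  have e1 : ((starRingEnd ℂ) (w2 (τ - T)) * p0).re - ((starRingEnd ℂ) (w2 τ) * p0).re
      = ((starRingEnd ℂ) Q * p0).re := by
    rw [hQ, map_sub, sub_mul, Complex.sub_re]
  have e2 : ((starRingEnd ℂ) Q * p0).re ≤ ‖Q‖ * r := by
    refine (Complex.re_le_norm _).trans ?_
    rw [norm_mul, RCLike.norm_conj]
  have e3 : r * ((starRingEnd ℂ) Q * p0).re ≤ r * (‖Q‖ * r) := mul_le_mul_of_nonneg_left e2 hr0.le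
  have e4 : r ^ 2 * (σ r * T / 16) ≤ r ^ 2 * ‖Q‖ := by nlinarith
  exact le_of_mul_le_mul_left e4 (by positivity)

lemma windows {σ L ω κ T t₀ w1 w2} (hs : Sat σ L) (hκ : 0 < κ) (hT0 : 0 < T)
    (hT : ω * T = 2 * π) (h : Sol σ ω κ t₀ w1 w2) (t M : ℝ) (ht : t₀ < t - 65 * T)
    (hM : ∀ s ∈ Set.Icc (t - 65 * T) t, |σ (zeta ω κ w1 w2 s)| ≤ M) (n : ℕ) (hn : n ≤ 64) :
    VV σ ω κ T w1 w2 t ≤ VV σ ω κ T w1 w2 (t - n * T)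
      - κ / T * ∑ j ∈ Finset.range n, ‖w2 (t - j * T - T) - w2 (t - j * T)‖ ^ 2
      + n * (κ ^ 2 * (T ^ 2 + L * T ^ 2 / 2) * M ^ 2) := by
  induction n with
  | zero => simp
  | succ n ih =>
    have ih := ih (by omega)
    have hn' : (n : ℝ) ≤ 63 := by
      have : n ≤ 63 := by omega
      exact_mod_cast this
    have hnT : (n : ℝ) * T ≤ 63 * T := mul_le_mul_of_nonneg_right hn' hT0.le
    have hnT0 : 0 ≤ (n : ℝ) * T := by positivity
    have := window hs hκ hT0 hT h (t - n * T) M (by linarith)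
      (fun s hs' => hM s ⟨by linarith [hs'.1], by linarith [hs'.2]⟩)
    rw [Finset.sum_range_succ]
    have e : t - n * T - T = t - ((n + 1 : ℕ) : ℝ) * T := by push_cast; ring
    rw [← e]
    push_cast
    nlinarith

lemma key {σ L ω κ T t₀ w1 w2} (hs : Sat σ L) (hω : 0 < ω) (hκ : 0 < κ) (hT0 : 0 < T)
    (hT : ω * T = 2 * π) (h : Sol σ ω κ t₀ w1 w2)
    (hk1 : L * (κ ^ 2 * (65 * T * (65 * T)) + κ * (65 * T)) ≤ 1 / 64)
    (hk2 : 64 * 16 * κ * (T ^ 2 + L * T ^ 2 / 2) ≤ T / 512)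
    (t : ℝ) (ht : t₀ < t - 65 * T) :
    ∃ r, 0 ≤ r ∧ VV σ ω κ T w1 w2 t + κ * T / 512 * σ r ^ 2 ≤ VV σ ω κ T w1 w2 (t - 64 * T) ∧
      ‖(κ : ℂ) ^ 2 * w1 t + κ * w2 t‖ ≤ 2 * r ∧ κ ^ 2 * (64 * T) * ‖w2 t‖ ≤ 2 * r := by
  have hL := hs.Lpos
  set u : ℝ → ℝ := fun s => σ (zeta ω κ w1 w2 s) with hu
  have huc : Continuous u := hs.cont.comp h.zcont
  obtain ⟨sm, hsm, hmax⟩ := isCompact_Icc.exists_isMaxOn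
    (Set.nonempty_Icc.2 (by linarith : t - 65 * T ≤ t)) huc.abs.continuousOn
  set U := |u sm| with hU
  have hU0 : 0 ≤ U := abs_nonneg _
  have hM : ∀ s ∈ Set.Icc (t - 65 * T) t, |σ (zeta ω κ w1 w2 s)| ≤ U := fun s hs' => hmax hs'
  set v : ℂ := (κ : ℂ) ^ 2 * w2 t with hv
  have hvn : ‖v‖ = κ ^ 2 * ‖w2 t‖ := by
    rw [hv, norm_mul, norm_pow, Complex.norm_real, Real.norm_eq_abs, sq_abs]
  set ξ : ℝ → ℂ := fun s => (κ : ℂ) ^ 2 * w1 s + κ * w2 s with hξ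
  set p : ℝ → ℂ := fun s => ξ t + ((s - t : ℝ) : ℂ) * v with hp
  have htt : t ∈ Set.Icc (t - 65 * T) t := ⟨by linarith, le_rfl⟩
  -- affine approximation
  have haff : ∀ s ∈ Set.Icc (t - 65 * T) t, ‖ξ s - p s‖ ≤
      (κ ^ 2 * (65 * T * (65 * T)) + κ * (65 * T)) * U := by
    intro s hs'
    have a1 := w1_var h ht hM s t hs' htt (65 * T) (by linarith)
    have a2 := w2_var h ht.le hM s hs' t htt
    have a3 : |t - s| ≤ 65 * T := by rw [abs_le]; constructor <;> linarith [hs'.1, hs'.2]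
    have a4 : |s - t| ≤ 65 * T := by rw [abs_sub_comm]; exact a3
    have e : ξ s - p s = -((κ : ℂ) ^ 2 * (w1 t - w1 s - ((t - s : ℝ) : ℂ) * w2 t))
        + κ * (w2 s - w2 t) := by
      simp only [hξ, hp, hv]; push_cast; ring
    rw [e]
    refine (norm_add_le _ _).trans ?_
    rw [norm_neg, norm_mul, norm_mul, norm_pow, Complex.norm_real, Real.norm_eq_abs,
      abs_of_pos hκ]
    have b1 : κ ^ 2 * ‖w1 t - w1 s - ((t - s : ℝ) : ℂ) * w2 t‖ ≤ κ ^ 2 * (U * (65 * T) * (65 * T)) :=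
      mul_le_mul_of_nonneg_left (a1.trans (mul_le_mul_of_nonneg_left a3 (by positivity)))
        (by positivity)
    have b2 : κ * ‖w2 s - w2 t‖ ≤ κ * (U * (65 * T)) :=
      mul_le_mul_of_nonneg_left (a2.trans (mul_le_mul_of_nonneg_left a4 hU0)) hκ.le
    linarith
  have hup : ∀ s ∈ Set.Icc (t - 65 * T) t, |u s - σ ((E ω s * p s).re)| ≤ U / 64 := by
    intro s hs'
    refine (hs.lip _ _).trans ?_
    have e : zeta ω κ w1 w2 s - (E ω s * p s).re = (E ω s * (ξ s - p s)).re := by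
      rw [mul_sub, Complex.sub_re]; rfl
    rw [e]
    have a := (re_E_mul_le ω s (ξ s - p s)).trans (haff s hs')
    have b := mul_le_mul_of_nonneg_left a hL.le
    have c := mul_le_mul_of_nonneg_right hk1 hU0
    linarith
  -- choice of the good end
  obtain ⟨s0, τ, hτt, hτ1, hjj, hτJ, hr1, hr2⟩ : ∃ s0 τ : ℝ, τ ≤ t ∧ t - 64 * T ≤ τ - T ∧
      (∃ j : ℕ, j < 64 ∧ τ = t - j * T) ∧ (∀ s ∈ Set.Icc (τ - T) τ, |s - s0| ≤ T) ∧
      ‖p t‖ ≤ ‖p s0‖ ∧ ‖p (t - 64 * T)‖ ≤ ‖p s0‖ := by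
    rcases le_total ‖p (t - 64 * T)‖ ‖p t‖ with hle | hle
    · refine ⟨t, t, le_rfl, by linarith, ⟨0, by norm_num, by simp⟩, ?_, le_rfl, hle⟩
      intro s hs'
      rw [abs_le]; constructor <;> linarith [hs'.1, hs'.2]
    · refine ⟨t - 64 * T, t - 63 * T, by linarith, by linarith, ⟨63, by norm_num, by norm_num⟩,
        ?_, hle, le_rfl⟩
      intro s hs'
      rw [abs_le]; constructor <;> linarith [hs'.1, hs'.2]
  set r := ‖p s0‖ with hr
  have hr0 : 0 ≤ r := norm_nonneg _
  have hvr : 64 * T * ‖v‖ ≤ 2 * r := by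
    have e : p t - p (t - 64 * T) = ((64 * T : ℝ) : ℂ) * v := by
      simp only [hp]; push_cast; ring
    have e2 := norm_sub_le (p t) (p (t - 64 * T))
    rw [e, norm_mul, Complex.norm_real, Real.norm_eq_abs, abs_of_pos (by positivity)] at e2
    linarith
  have hpr : ∀ s ∈ Set.Icc (t - 65 * T) t, ‖p s‖ ≤ 2 * r := by
    intro s hs'
    set θ : ℝ := (t - s) / (64 * T) with hθ
    have hθ0 : 0 ≤ θ := div_nonneg (by linarith [hs'.2]) (by positivity)
    have hθ1 : θ ≤ 65 / 64 := by
      rw [hθ, div_le_iff₀ (by positivity)]; linarith [hs'.1]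
    have hθe : θ * (64 * T) = t - s := by rw [hθ]; field_simp
    have e : p s = ((1 - θ : ℝ) : ℂ) * p t + (θ : ℂ) * p (t - 64 * T) := by
      have : s - t = -(θ * (64 * T)) := by linarith
      simp only [hp, this]; push_cast; ring
    rw [e]
    refine (norm_add_le _ _).trans ?_
    rw [norm_mul, norm_mul, Complex.norm_real, Complex.norm_real, Real.norm_eq_abs,
      Real.norm_eq_abs, abs_of_nonneg hθ0]
    have c1 : |1 - θ| + θ ≤ 2 := by
      rcases abs_cases (1 - θ) with ⟨h', _⟩ | ⟨h', _⟩ <;> rw [h'] <;> linarith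
    have c2 := mul_le_mul_of_nonneg_left hr1 (abs_nonneg (1 - θ))
    have c3 := mul_le_mul_of_nonneg_left hr2 hθ0
    have c4 := mul_le_mul_of_nonneg_right c1 hr0
    linarith
  have hUr : U ≤ 4 * σ r := by
    have a1 := hup sm hsm
    have a2 : |σ ((E ω sm * p sm).re)| ≤ 2 * σ r := by
      rw [hs.abs_eq]
      exact (hs.mono ((re_E_mul_le ω sm (p sm)).trans (hpr sm hsm))).trans (hs.two hr0)
    have a3 : U ≤ |u sm - σ ((E ω sm * p sm).re)| + |σ ((E ω sm * p sm).re)| := by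
      have := abs_add_le (u sm - σ ((E ω sm * p sm).re)) (σ ((E ω sm * p sm).re))
      rwa [sub_add_cancel] at this
    have := hs.nonneg hr0
    linarith
  have hJ : ∀ s ∈ Set.Icc (τ - T) τ, s ∈ Set.Icc (t - 65 * T) t := fun s hs' =>
    ⟨by linarith [hs'.1], by linarith [hs'.2]⟩
  have hQ := lowerQ hs hω hT0 hT h τ (by linarith) (p s0) (fun s => (E ω s * p s).re)
    (by
      intro s hs'
      have e : (E ω s * p s).re - (E ω s * p s0).re = (E ω s * (((s - s0 : ℝ) : ℂ) * v)).re := by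
        rw [← Complex.sub_re, ← mul_sub]
        congr 2
        simp only [hp]; push_cast; ring
      rw [e]
      refine (re_E_mul_le _ _ _).trans ?_
      rw [norm_mul, Complex.norm_real, Real.norm_eq_abs]
      have := mul_le_mul_of_nonneg_right (hτJ s hs') (norm_nonneg v)
      rw [← hr]
      linarith)
    (by
      intro s hs'
      refine (hup s (hJ s hs')).trans ?_
      rw [← hr]; linarith)
  rw [← hr] at hQ
  have hsum := windows hs hκ hT0 hT h t U ht hM 64 le_rfl
  obtain ⟨j, hj, hjτ⟩ := hjj
  have hsing := Finset.single_le_sum (s := Finset.range 64)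
    (f := fun j : ℕ => ‖w2 (t - j * T - T) - w2 (t - j * T)‖ ^ 2) (fun _ _ => by positivity)
    (Finset.mem_range.2 hj)
  simp only [← hjτ] at hsing
  have hσr := hs.nonneg hr0
  refine ⟨r, hr0, ?_, ?_, ?_⟩
  · have h1 : (σ r * T / 16) ^ 2 ≤ ‖w2 (τ - T) - w2 τ‖ ^ 2 :=
      pow_le_pow_left₀ (by positivity) hQ 2
    have h2 : κ / T * (σ r * T / 16) ^ 2 ≤ κ / T *
        ∑ j ∈ Finset.range 64, ‖w2 (t - j * T - T) - w2 (t - j * T)‖ ^ 2 :=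
      mul_le_mul_of_nonneg_left (h1.trans hsing) (by positivity)
    have h3 : κ / T * (σ r * T / 16) ^ 2 = κ * T / 256 * σ r ^ 2 := by
      field_simp; norm_num
    have h4 : U ^ 2 ≤ 16 * σ r ^ 2 := by
      have := pow_le_pow_left₀ hU0 hUr 2
      nlinarith
    have h5 : (64 : ℝ) * (κ ^ 2 * (T ^ 2 + L * T ^ 2 / 2) * U ^ 2) ≤ κ * T / 512 * σ r ^ 2 := by
      have a1 : (64 : ℝ) * (κ ^ 2 * (T ^ 2 + L * T ^ 2 / 2) * U ^ 2) ≤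
          64 * (κ ^ 2 * (T ^ 2 + L * T ^ 2 / 2) * (16 * σ r ^ 2)) := by gcongr
      have a2 := mul_le_mul_of_nonneg_right hk2 (by positivity : 0 ≤ κ * σ r ^ 2)
      linarith
    push_cast at hsum
    linarith
  · have := hpr t htt
    simpa [hp] using this
  · rw [hvn] at hvr
    linarith

/-- squared norm of the state -/
def NN (w1 w2 : ℝ → ℂ) (t : ℝ) : ℝ := ‖w1 t‖ ^ 2 + ‖w2 t‖ ^ 2

lemma NN_nonneg (w1 w2 : ℝ → ℂ) (t : ℝ) : 0 ≤ NN w1 w2 t := by unfold NN; positivity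

lemma zeta_le {ω κ : ℝ} (hκ : 0 < κ) (hκ1 : κ ≤ 1) (w1 w2 : ℝ → ℂ) (t : ℝ) :
    |zeta ω κ w1 w2 t| ≤ ‖w1 t‖ + ‖w2 t‖ := by
  refine (re_E_mul_le _ _ _).trans ((norm_add_le _ _).trans ?_)
  rw [norm_mul, norm_mul, norm_pow, Complex.norm_real, Real.norm_eq_abs, abs_of_pos hκ]
  have : κ ^ 2 ≤ 1 := by nlinarith
  nlinarith [norm_nonneg (w1 t), norm_nonneg (w2 t)]

lemma growth {σ L ω κ t₀ w1 w2} (hs : Sat σ L) (hκ : 0 < κ) (hκ1 : κ ≤ 1)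
    (h : Sol σ ω κ t₀ w1 w2) (t : ℝ) (ht : t₀ ≤ t) :
    NN w1 w2 t ≤ Real.exp ((1 + 3 * L) * (t - t₀)) * NN w1 w2 t₀ := by
  set A := 1 + 3 * L with hA
  have hL := hs.Lpos
  have hc1 := h.c1
  have hc2 := h.c2
  have hder : ∀ s, t₀ < s → HasDerivAt (fun s => Real.exp (-A * s) * NN w1 w2 s)
      (Real.exp (-A * s) * (-A) * NN w1 w2 s + Real.exp (-A * s) *
        (2 * ((starRingEnd ℂ) (w2 s) * w1 s).re +
          2 * ((starRingEnd ℂ) (-((σ (zeta ω κ w1 w2 s) : ℝ) : ℂ) * (starRingEnd ℂ) (E ω s)) * w2 s).re)) s := by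
    intro s hst
    have a1 : HasDerivAt (fun s => Real.exp (-A * s)) (Real.exp (-A * s) * (-A)) s := by
      have := ((hasDerivAt_id s).const_mul (-A)).exp
      simpa using this
    exact a1.mul ((h.d1 s hst).nsq.add (h.d2 s hst).nsq)
  have hanti : AntitoneOn (fun s => Real.exp (-A * s) * NN w1 w2 s) (Set.Ici t₀) := by
    refine antitoneOn_of_hasDerivWithinAt_nonpos (convex_Ici _) ?_
      (fun s hs' => (hder s (by simpa using hs')).hasDerivWithinAt) ?_
    · apply Continuous.continuousOn
      unfold NN
      fun_prop
    · intro s _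
      have b1 : ((starRingEnd ℂ) (w2 s) * w1 s).re ≤ ‖w2 s‖ * ‖w1 s‖ := by
        refine (Complex.re_le_norm _).trans ?_
        rw [norm_mul, RCLike.norm_conj]
      have b2 : ((starRingEnd ℂ) (-((σ (zeta ω κ w1 w2 s) : ℝ) : ℂ) * (starRingEnd ℂ) (E ω s)) * w2 s).re
          ≤ L * (‖w1 s‖ + ‖w2 s‖) * ‖w2 s‖ := by
        refine (Complex.re_le_norm _).trans ?_
        rw [norm_mul, RCLike.norm_conj, norm_mul, norm_neg, RCLike.norm_conj, E_norm, mul_one,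
          Complex.norm_real, Real.norm_eq_abs]
        refine mul_le_mul_of_nonneg_right ?_ (norm_nonneg _)
        have := hs.lip (zeta ω κ w1 w2 s) 0
        rw [hs.zero, sub_zero, sub_zero] at this
        exact this.trans (mul_le_mul_of_nonneg_left (zeta_le hκ hκ1 _ _ _) hL.le)
      have b3 : 2 * ((starRingEnd ℂ) (w2 s) * w1 s).re +
          2 * ((starRingEnd ℂ) (-((σ (zeta ω κ w1 w2 s) : ℝ) : ℂ) * (starRingEnd ℂ) (E ω s)) * w2 s).re
          ≤ A * NN w1 w2 s := by
        unfold NN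
        nlinarith [sq_nonneg (‖w1 s‖ - ‖w2 s‖), mul_nonneg hL.le (sq_nonneg (‖w1 s‖ - ‖w2 s‖)),
          mul_nonneg hL.le (sq_nonneg (‖w1 s‖))]
      have b4 := mul_le_mul_of_nonneg_left b3 (Real.exp_pos (-A * s)).le
      linarith
  have := hanti (a := t₀) (b := t) Set.self_mem_Ici ht ht
  simp only at this
  have e1 : Real.exp (A * t) * Real.exp (-A * t) = 1 := by
    rw [← Real.exp_add]; simp
  have e2 : Real.exp (A * (t - t₀)) = Real.exp (A * t) * Real.exp (-A * t₀) := by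
    rw [← Real.exp_add]; congr 1; ring
  have := mul_le_mul_of_nonneg_left this (Real.exp_pos (A * t)).le
  rw [← mul_assoc, ← mul_assoc, e1, one_mul, ← e2] at this
  exact this

lemma VV_le {σ L ω κ T t₀ w1 w2} (hs : Sat σ L) (hκ : 0 < κ) (hκ1 : κ ≤ 1) (hT0 : 0 < T)
    (h : Sol σ ω κ t₀ w1 w2) (t B : ℝ) (hB : ∀ s ∈ Set.Icc (t - T) t, NN w1 w2 s ≤ B) :
    VV σ ω κ T w1 w2 t ≤ (1 / 2 + 2 * L) * B := by
  have hL := hs.Lpos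
  have hp : Continuous (fun s => prim σ (zeta ω κ w1 w2 s)) := hs.prim_cont.comp h.zcont
  have h1 : ∫ s in (t - T)..t, prim σ (zeta ω κ w1 w2 s) ≤ ∫ s in (t - T)..t, 2 * L * B := by
    refine intervalIntegral.integral_mono_on (by linarith) (hp.intervalIntegrable _ _)
      (continuous_const.intervalIntegrable _ _) ?_
    intro s hs'
    refine (hs.prim_le _).trans ?_
    have a := zeta_le (ω := ω) hκ hκ1 w1 w2 s
    have b : zeta ω κ w1 w2 s ^ 2 ≤ 2 * B := by
      rw [← sq_abs]
      have := pow_le_pow_left₀ (abs_nonneg _) a 2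
      have hb := hB s hs'
      unfold NN at hb
      nlinarith [sq_nonneg (‖w1 s‖ - ‖w2 s‖)]
    nlinarith
  rw [intervalIntegral.integral_const, smul_eq_mul] at h1
  have h2 : 1 / T * ∫ s in (t - T)..t, prim σ (zeta ω κ w1 w2 s) ≤ 2 * L * B := by
    have := mul_le_mul_of_nonneg_left h1 (by positivity : 0 ≤ 1 / T)
    have e : 1 / T * ((t - (t - T)) * (2 * L * B)) = 2 * L * B := by field_simp; ring
    linarith
  have h3 := hB t ⟨by linarith, le_rfl⟩
  unfold NN at h3
  unfold VV
  have h4 : κ ^ 2 ≤ 1 := by nlinarith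
  nlinarith [sq_nonneg (‖w1 t‖), sq_nonneg (‖w2 t‖)]

lemma VV_nonneg {σ L ω κ T w1 w2} (hs : Sat σ L) (hT0 : 0 < T) (t : ℝ) :
    0 ≤ VV σ ω κ T w1 w2 t := by
  unfold VV
  have : 0 ≤ ∫ s in (t - T)..t, prim σ (zeta ω κ w1 w2 s) :=
    intervalIntegral.integral_nonneg (by linarith) (fun s _ => hs.prim_nonneg _)
  positivity


lemma core {σ : ℝ → ℝ} {L ω : ℝ} (hs : Sat σ L) (hω : 0 < ω) : ∃ κ : ℝ, 0 < κ ∧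
    (∀ δ > 0, ∃ η > 0, ∀ t₀ w1 w2, Sol σ ω κ t₀ w1 w2 → NN w1 w2 t₀ ≤ η →
      ∀ t, t₀ ≤ t → NN w1 w2 t ≤ δ) ∧
    (∀ t₀ w1 w2, Sol σ ω κ t₀ w1 w2 → Tendsto (NN w1 w2) atTop (nhds 0)) := by
  have hL := hs.Lpos
  set T : ℝ := 2 * π / ω with hTd
  have hT0 : 0 < T := by positivity
  have hT : ω * T = 2 * π := by rw [hTd]; field_simp
  set A1 : ℝ := 64 * L * (65 * T * (65 * T) + 65 * T) with hA1
  set A2 : ℝ := 512 * 64 * 16 * (T + L * T / 2) with hA2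
  have hA1p : 0 < A1 := by positivity
  have hA2p : 0 < A2 := by positivity
  set κ : ℝ := 1 / (1 + A1 + A2) with hκd
  have hκ : 0 < κ := by positivity
  have hκ1 : κ ≤ 1 := by rw [hκd, div_le_one (by positivity)]; linarith
  have hκe : κ * (1 + A1 + A2) = 1 := by rw [hκd]; field_simp
  have hκA1 : κ * A1 ≤ 1 := by nlinarith [mul_pos hκ hA1p, mul_pos hκ hA2p]
  have hκA2 : κ * A2 ≤ 1 := by nlinarith [mul_pos hκ hA1p, mul_pos hκ hA2p]
  have hk1 : L * (κ ^ 2 * (65 * T * (65 * T)) + κ * (65 * T)) ≤ 1 / 64 := by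
    have : κ ^ 2 * (65 * T * (65 * T)) ≤ κ * (65 * T * (65 * T)) :=
      mul_le_mul_of_nonneg_right (by nlinarith) (by positivity)
    have h2 := mul_le_mul_of_nonneg_left this hL.le
    rw [hA1] at hκA1
    linarith
  have hk2 : 64 * 16 * κ * (T ^ 2 + L * T ^ 2 / 2) ≤ T / 512 := by
    rw [hA2] at hκA2
    have := mul_le_mul_of_nonneg_right hκA2 hT0.le
    linarith
  -- packaged decrease
  obtain ⟨c, C, hc, hC, hkey⟩ : ∃ c C : ℝ, 0 < c ∧ 0 < C ∧ ∀ t₀ w1 w2, Sol σ ω κ t₀ w1 w2 →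
      ∀ t, t₀ < t - 65 * T → ∃ r, 0 ≤ r ∧
        VV σ ω κ T w1 w2 t + c * σ r ^ 2 ≤ VV σ ω κ T w1 w2 (t - 64 * T) ∧
        NN w1 w2 t ≤ C * r ^ 2 := by
    set C2 : ℝ := 2 / (κ ^ 2 * (64 * T)) with hC2
    set C1 : ℝ := (2 + κ * C2) / κ ^ 2 with hC1
    have hC2p : 0 < C2 := by positivity
    have hC1p : 0 < C1 := by positivity
    refine ⟨κ * T / 512, C1 ^ 2 + C2 ^ 2, by positivity, by positivity, ?_⟩
    intro t₀ w1 w2 h t ht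
    obtain ⟨r, hr, h1, h2, h3⟩ := key hs hω hκ hT0 hT h hk1 hk2 t ht
    refine ⟨r, hr, h1, ?_⟩
    have b2 : ‖w2 t‖ ≤ C2 * r := by
      rw [hC2, div_mul_eq_mul_div, le_div_iff₀ (by positivity)]
      linarith
    have b1 : ‖w1 t‖ ≤ C1 * r := by
      rw [hC1, div_mul_eq_mul_div, le_div_iff₀ (by positivity)]
      have e := norm_sub_le ((κ : ℂ) ^ 2 * w1 t + κ * w2 t) (κ * w2 t)
      rw [add_sub_cancel_right, norm_mul, norm_mul, norm_pow, Complex.norm_real,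
        Real.norm_eq_abs, abs_of_pos hκ] at e
      have := mul_le_mul_of_nonneg_left b2 hκ.le
      linarith
    unfold NN
    have c1 := pow_le_pow_left₀ (norm_nonneg _) b1 2
    have c2 := pow_le_pow_left₀ (norm_nonneg _) b2 2
    nlinarith
  set G : ℝ := Real.exp ((1 + 3 * L) * (65 * T)) with hG
  have hGp : 0 < G := Real.exp_pos _
  have hgrow : ∀ t₀ w1 w2, Sol σ ω κ t₀ w1 w2 → ∀ t, t₀ ≤ t → t ≤ t₀ + 65 * T →
      NN w1 w2 t ≤ G * NN w1 w2 t₀ := by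
    intro t₀ w1 w2 h t h1 h2
    refine (growth hs hκ hκ1 h t h1).trans ?_
    refine mul_le_mul_of_nonneg_right ?_ (NN_nonneg _ _ _)
    rw [hG]
    apply Real.exp_le_exp.2
    apply mul_le_mul_of_nonneg_left _ (by positivity)
    linarith
  have hstab : ∀ δ > 0, ∃ η > 0, ∀ t₀ w1 w2, Sol σ ω κ t₀ w1 w2 → NN w1 w2 t₀ ≤ η →
      ∀ t, t₀ ≤ t → NN w1 w2 t ≤ δ := by
    intro δ hδ
    set ρ := Real.sqrt (δ / C) with hρ
    have hρp : 0 < ρ := Real.sqrt_pos.2 (by positivity)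
    have hρ2 : C * ρ ^ 2 = δ := by rw [hρ, Real.sq_sqrt (by positivity)]; field_simp
    have hσρ := hs.pos ρ hρp
    set F : ℝ := (1 / 2 + 2 * L) * G with hF
    have hFp : 0 < F := by positivity
    refine ⟨min (δ / G) (c * σ ρ ^ 2 / (2 * F)), by positivity, ?_⟩
    intro t₀ w1 w2 h h0 t ht
    have hη1 : G * NN w1 w2 t₀ ≤ δ := by
      have := h0.trans (min_le_left _ _)
      rw [le_div_iff₀ hGp] at this
      linarith
    have hη2 : F * NN w1 w2 t₀ < c * σ ρ ^ 2 := by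
      have := h0.trans (min_le_right _ _)
      rw [le_div_iff₀ (by positivity)] at this
      have : 0 < c * σ ρ ^ 2 := by positivity
      linarith
    have hV : ∀ n : ℕ, ∀ t, t₀ + T ≤ t → t ≤ t₀ + (65 + 64 * n) * T →
        VV σ ω κ T w1 w2 t ≤ F * NN w1 w2 t₀ := by
      intro n
      induction n with
      | zero =>
        intro t h1 h2
        simp only [Nat.cast_zero, mul_zero, add_zero] at h2
        rw [hF, mul_assoc]
        exact VV_le hs hκ hκ1 hT0 h t _ (fun s hs' => hgrow t₀ w1 w2 h s (by linarith [hs'.1])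
          (by linarith [hs'.2]))
      | succ n ih =>
        intro t h1 h2
        push_cast at h2
        by_cases h3 : t ≤ t₀ + 65 * T
        · refine ih t h1 ?_
          have : 0 ≤ (n : ℝ) * T := by positivity
          linarith
        · push Not at h3
          obtain ⟨r, hr, hr1, _⟩ := hkey t₀ w1 w2 h t (by linarith)
          have := ih (t - 64 * T) (by linarith) (by linarith)
          have : 0 ≤ c * σ r ^ 2 := by positivity
          linarith
    by_cases h3 : t ≤ t₀ + 65 * T
    · exact (hgrow t₀ w1 w2 h t ht h3).trans hη1
    · push Not at h3
      obtain ⟨r, hr, hr1, hr2⟩ := hkey t₀ w1 w2 h t (by linarith)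
      obtain ⟨n, hn⟩ := exists_nat_ge ((t - t₀) / (64 * T))
      rw [div_le_iff₀ (by positivity)] at hn
      have hVt := hV n (t - 64 * T) (by linarith) (by linarith)
      have hVt0 := VV_nonneg (w1 := w1) (w2 := w2) (ω := ω) (κ := κ) hs hT0 t
      have hrρ : r ≤ ρ := by
        by_contra hcon
        push Not at hcon
        have h5 := hs.mono hcon.le
        have h6 := pow_le_pow_left₀ hσρ.le h5 2
        have h7 := mul_le_mul_of_nonneg_left h6 hc.le
        linarith
      rw [← hρ2]
      refine hr2.trans (mul_le_mul_of_nonneg_left (pow_le_pow_left₀ hr hrρ 2) hC.le)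
  refine ⟨κ, hκ, hstab, ?_⟩
  intro t₀ w1 w2 h
  rw [Metric.tendsto_atTop]
  intro ε hε
  obtain ⟨η, hη, hst⟩ := hstab (ε / 2) (by positivity)
  obtain ⟨t1, ht1, hN⟩ : ∃ t1, t₀ ≤ t1 ∧ NN w1 w2 t1 ≤ η := by
    by_contra hcon
    push Not at hcon
    set ρ := Real.sqrt (η / C) with hρ
    have hρp : 0 < ρ := Real.sqrt_pos.2 (by positivity)
    have hρ2 : C * ρ ^ 2 = η := by rw [hρ, Real.sq_sqrt (by positivity)]; field_simp
    have hσρ := hs.pos ρ hρp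
    have hstep : ∀ t, t₀ < t - 65 * T →
        VV σ ω κ T w1 w2 t + c * σ ρ ^ 2 ≤ VV σ ω κ T w1 w2 (t - 64 * T) := by
      intro t ht
      obtain ⟨r, hr, hr1, hr2⟩ := hkey t₀ w1 w2 h t ht
      have h4 := hcon t (by linarith)
      have h5 : ρ ≤ r := by
        by_contra h6
        push Not at h6
        have := mul_le_mul_of_nonneg_left (pow_le_pow_left₀ hr h6.le 2) hC.le
        linarith
      have h6 := mul_le_mul_of_nonneg_left (pow_le_pow_left₀ hσρ.le (hs.mono h5) 2) hc.le
      linarith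
    have hit : ∀ n : ℕ, VV σ ω κ T w1 w2 (t₀ + 2 * T + n * (64 * T)) + n * (c * σ ρ ^ 2)
        ≤ VV σ ω κ T w1 w2 (t₀ + 2 * T) := by
      intro n
      induction n with
      | zero => simp
      | succ n ih =>
        have h0 : 0 ≤ (n : ℝ) * (64 * T) := by positivity
        have := hstep (t₀ + 2 * T + (n + 1 : ℕ) * (64 * T)) (by push_cast; linarith)
        have e : t₀ + 2 * T + (n + 1 : ℕ) * (64 * T) - 64 * T = t₀ + 2 * T + n * (64 * T) := by
          push_cast; ring
        rw [e] at this
        push_cast at this ⊢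
        linarith
    obtain ⟨n, hn⟩ := exists_nat_gt (VV σ ω κ T w1 w2 (t₀ + 2 * T) / (c * σ ρ ^ 2))
    rw [div_lt_iff₀ (by positivity)] at hn
    have h1 := hit n
    have h2 := VV_nonneg (w1 := w1) (w2 := w2) (ω := ω) (κ := κ) hs hT0
      (t₀ + 2 * T + n * (64 * T))
    linarith
  refine ⟨t1, fun t ht => ?_⟩
  have h' : Sol σ ω κ t1 w1 w2 := ⟨h.c1, h.c2, fun s hs' => h.d1 s (by linarith),
    fun s hs' => h.d2 s (by linarith)⟩
  have := hst t1 w1 w2 h' hN t ht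
  rw [Real.dist_eq, sub_zero, abs_of_nonneg (NN_nonneg _ _ _)]
  linarith

lemma sat_of_isSaturation {σ : ℝ → ℝ} (h : IsSaturation σ) : ∃ L, Sat σ L := by
  obtain ⟨hodd, ⟨L, hL⟩, hpos, -, -, hmono, hdiff, hanti⟩ := h
  have h0 : σ 0 = 0 := by
    have := hodd 0
    simp at this; linarith
  have hconc : ConcaveOn ℝ (Set.Ici 0) σ := by
    refine AntitoneOn.concaveOn_of_deriv (convex_Ici 0) hL.continuous.continuousOn ?_ ?_
    · rw [interior_Ici]; exact hdiff
    · rw [interior_Ici]; exact hanti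
  refine ⟨L + 1, hodd, hmono, by positivity, ?_, ?_, ?_⟩
  · intro x y
    have := hL.dist_le_mul x y
    rw [Real.dist_eq, Real.dist_eq] at this
    nlinarith [abs_nonneg (x - y)]
  · intro x hx
    have := hpos x hx.ne'
    exact pos_of_mul_pos_left this hx.le
  · intro l r hl hl1 hr
    have := hconc.2 (Set.mem_Ici.2 hr) (Set.mem_Ici.2 (le_refl (0:ℝ))) hl (sub_nonneg.2 hl1)
      (by ring)
    simpa [h0] using this

lemma beta_ne {ω : ℝ} {b : Fin 4 → ℝ} (h : Controllable (J2mat ω) b) :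
    (⟨b 2, b 3⟩ : ℂ) ≠ 0 := by
  intro hb
  have h2 : b 2 = 0 := congrArg Complex.re hb
  have h3 : b 3 = 0 := congrArg Complex.im hb
  have hle : Submodule.span ℝ {b, (J2mat ω).mulVec b, (J2mat ω * J2mat ω).mulVec b,
      (J2mat ω * J2mat ω * J2mat ω).mulVec b} ≤
      LinearMap.ker (LinearMap.proj (R := ℝ) (φ := fun _ : Fin 4 => ℝ) 2) := by
    have hA : ∀ v : Fin 4 → ℝ, v 2 = 0 → v 3 = 0 →
        (J2mat ω).mulVec v 2 = 0 ∧ (J2mat ω).mulVec v 3 = 0 := by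
      intro v hv2 hv3
      constructor <;> simp [J2mat, Matrix.mulVec, dotProduct, Fin.sum_univ_four, hv2, hv3]
    have a1 := hA b h2 h3
    have a2 := hA _ a1.1 a1.2
    have a3 := hA _ a2.1 a2.2
    rw [Submodule.span_le]
    intro v hv
    simp only [Set.mem_insert_iff, Set.mem_singleton_iff] at hv
    rcases hv with rfl | rfl | rfl | rfl
    · exact h2
    · exact a1.1
    · rw [← Matrix.mulVec_mulVec]; exact a2.1
    · rw [← Matrix.mulVec_mulVec, ← Matrix.mulVec_mulVec]; exact a3.1
  rw [show Submodule.span ℝ _ = ⊤ from h] at hle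
  have := hle (Submodule.mem_top (x := (fun _ => 1 : Fin 4 → ℝ)))
  simp at this

lemma conj_E_mul (ω t : ℝ) : E ω t * (starRingEnd ℂ) (E ω t) = 1 := by
  rw [Complex.mul_conj, Complex.normSq_eq_norm_sq, E_norm]; simp

def y2 (β2 : ℂ) (x : Fin 4 → ℝ) : ℂ := (⟨x 2, x 3⟩ : ℂ) / β2

def y1 (β1 β2 : ℂ) (x : Fin 4 → ℝ) : ℂ := (⟨x 0, x 1⟩ : ℂ) / β2 - β1 * (⟨x 2, x 3⟩ : ℂ) / β2 ^ 2

lemma mk_deriv {f g : ℝ → ℝ} {f' g' t : ℝ} (hf : HasDerivAt f f' t) (hg : HasDerivAt g g' t) :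
    HasDerivAt (fun t => (⟨f t, g t⟩ : ℂ)) ⟨f', g'⟩ t := by
  have := hf.ofReal_comp.add (hg.ofReal_comp.mul_const Complex.I)
  have e : (fun t => (⟨f t, g t⟩ : ℂ)) = (fun t => (f t : ℂ) + (g t : ℂ) * Complex.I) := by
    funext t; exact Complex.mk_eq_add_mul_I _ _
  rw [e, Complex.mk_eq_add_mul_I]
  exact this

lemma mk_cont {f g : ℝ → ℝ} (hf : Continuous f) (hg : Continuous g) :
    Continuous (fun t => (⟨f t, g t⟩ : ℂ)) := by
  have e : (fun t => (⟨f t, g t⟩ : ℂ)) = (fun t => (f t : ℂ) + (g t : ℂ) * Complex.I) := by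
    funext t; exact Complex.mk_eq_add_mul_I _ _
  rw [e]; fun_prop

lemma norm_mk_le (a b : ℝ) : ‖(⟨a, b⟩ : ℂ)‖ ≤ |a| + |b| := Complex.norm_le_abs_re_add_abs_im _

def Kvec (κ : ℝ) (β1 β2 : ℂ) : Fin 4 → ℝ :=
  ![((κ : ℂ) ^ 2 / β2).re, -((κ : ℂ) ^ 2 / β2).im,
    (-(κ : ℂ) ^ 2 * β1 / β2 ^ 2 + κ / β2).re, -(-(κ : ℂ) ^ 2 * β1 / β2 ^ 2 + κ / β2).im]

lemma Kvec_eq (κ : ℝ) (β1 β2 : ℂ) (x : Fin 4 → ℝ) :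
    ∑ i, Kvec κ β1 β2 i * x i = ((κ : ℂ) ^ 2 * y1 β1 β2 x + κ * y2 β2 x).re := by
  have e : (κ : ℂ) ^ 2 * y1 β1 β2 x + κ * y2 β2 x =
      ((κ : ℂ) ^ 2 / β2) * (⟨x 0, x 1⟩ : ℂ) +
      (-(κ : ℂ) ^ 2 * β1 / β2 ^ 2 + κ / β2) * (⟨x 2, x 3⟩ : ℂ) := by
    unfold y1 y2; ring
  rw [e, Fin.sum_univ_four]
  generalize hP : (κ : ℂ) ^ 2 / β2 = P
  generalize hR : -(κ : ℂ) ^ 2 * β1 / β2 ^ 2 + κ / β2 = R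
  have k0 : Kvec κ β1 β2 0 = P.re := by rw [← hP]; rfl
  have k1 : Kvec κ β1 β2 1 = -P.im := by rw [← hP]; rfl
  have k2 : Kvec κ β1 β2 2 = R.re := by rw [← hR]; rfl
  have k3 : Kvec κ β1 β2 3 = -R.im := by rw [← hR]; rfl
  rw [k0, k1, k2, k3]
  simp only [Complex.add_re, Complex.mul_re]
  ring

/-- Passing to rotating coordinates. -/
lemma sol_of {ω κ : ℝ} {b : Fin 4 → ℝ} {σ : ℝ → ℝ} (hb : (⟨b 2, b 3⟩ : ℂ) ≠ 0)
    (t₀ : ℝ) (x : ℝ → Fin 4 → ℝ)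
    (hx : ∀ t, t₀ ≤ t → HasDerivAt x ((J2mat ω).mulVec (x t)
      - σ (∑ i, Kvec κ ⟨b 0, b 1⟩ ⟨b 2, b 3⟩ i * x t i) • b) t) :
    Sol σ ω κ t₀
      (fun t => (starRingEnd ℂ) (E ω t) * y1 ⟨b 0, b 1⟩ ⟨b 2, b 3⟩ (x (max t t₀)))
      (fun t => (starRingEnd ℂ) (E ω t) * y2 ⟨b 2, b 3⟩ (x (max t t₀))) := by
  set β1 : ℂ := ⟨b 0, b 1⟩ with hβ1
  set β2 : ℂ := ⟨b 2, b 3⟩ with hβ2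
  have hxc : Continuous fun t => x (max t t₀) := by
    have : ContinuousOn x (Set.Ici t₀) := fun t ht => (hx t ht).continuousAt.continuousWithinAt
    exact this.comp_continuous (by fun_prop) (fun t => Set.mem_Ici.2 (le_max_right _ _))
  have hxi : ∀ i, Continuous fun t => x (max t t₀) i := fun i => (continuous_apply i).comp hxc
  have hEc : Continuous fun t => (starRingEnd ℂ) (E ω t) := Complex.continuous_conj.comp (E_cont ω)
  have hc1 : Continuous fun t => (⟨x (max t t₀) 0, x (max t t₀) 1⟩ : ℂ) := mk_cont (hxi 0) (hxi 1)
  have hc2 : Continuous fun t => (⟨x (max t t₀) 2, x (max t t₀) 3⟩ : ℂ) := mk_cont (hxi 2) (hxi 3)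
  have hz : ∀ t, zeta ω κ (fun t => (starRingEnd ℂ) (E ω t) * y1 β1 β2 (x (max t t₀)))
      (fun t => (starRingEnd ℂ) (E ω t) * y2 β2 (x (max t t₀))) t =
      ∑ i, Kvec κ β1 β2 i * x (max t t₀) i := by
    intro t
    rw [Kvec_eq]
    unfold zeta
    congr 1
    linear_combination ((κ : ℂ) ^ 2 * y1 β1 β2 (x (max t t₀)) + κ * y2 β2 (x (max t t₀)))
      * conj_E_mul ω t
  -- derivatives in complex form
  have hd : ∀ t, t₀ < t → HasDerivAt (fun t => (⟨x (max t t₀) 0, x (max t t₀) 1⟩ : ℂ))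
      (ω * Complex.I * ⟨x t 0, x t 1⟩ + ⟨x t 2, x t 3⟩
        - (σ (∑ i, Kvec κ β1 β2 i * x t i) : ℝ) * β1) t ∧
      HasDerivAt (fun t => (⟨x (max t t₀) 2, x (max t t₀) 3⟩ : ℂ))
      (ω * Complex.I * ⟨x t 2, x t 3⟩
        - (σ (∑ i, Kvec κ β1 β2 i * x t i) : ℝ) * β2) t := by
    intro t ht
    have h1 : HasDerivAt (fun t => x (max t t₀)) ((J2mat ω).mulVec (x t)
      - σ (∑ i, Kvec κ β1 β2 i * x t i) • b) t := by
      refine (hx t ht.le).congr_of_eventuallyEq ?_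
      filter_upwards [lt_mem_nhds ht] with s hs'
      rw [max_eq_left hs'.le]
    have h2 := hasDerivAt_pi.1 h1
    constructor
    · refine (mk_deriv (h2 0) (h2 1)).congr_deriv ?_
      apply Complex.ext <;>
        simp [J2mat, Matrix.mulVec, dotProduct, Fin.sum_univ_four, hβ1] <;> ring
    · refine (mk_deriv (h2 2) (h2 3)).congr_deriv ?_
      apply Complex.ext <;>
        simp [J2mat, Matrix.mulVec, dotProduct, Fin.sum_univ_four, hβ2]
  have hEd : ∀ t, HasDerivAt (fun t => (starRingEnd ℂ) (E ω t))
      (-(ω * Complex.I) * (starRingEnd ℂ) (E ω t)) t := by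
    intro t
    refine ((E_deriv ω t).star).congr_deriv ?_
    simp [mul_comm]
  refine ⟨?_, ?_, ?_, ?_⟩
  · unfold y1; fun_prop
  · unfold y2; fun_prop
  · intro t ht
    obtain ⟨d1, d2⟩ := hd t ht
    have := (hEd t).mul ((d1.div_const β2).sub ((d2.const_mul β1).div_const (β2 ^ 2)))
    refine this.congr_deriv ?_
    simp only [Pi.sub_apply, y2, max_eq_left ht.le]
    field_simp
    ring
  · intro t ht
    obtain ⟨d1, d2⟩ := hd t ht
    have := (hEd t).mul (d2.div_const β2)
    refine this.congr_deriv ?_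
    rw [hz]
    simp only [max_eq_left ht.le]
    field_simp
    ring

lemma conj_E_norm_mul (ω t : ℝ) (z : ℂ) : ‖(starRingEnd ℂ) (E ω t) * z‖ = ‖z‖ := by
  rw [norm_mul, RCLike.norm_conj, E_norm, one_mul]

/-- norm equivalence -/
lemma norm_equiv (β1 β2 : ℂ) (hβ : β2 ≠ 0) : ∃ c > 0, ∀ x : Fin 4 → ℝ,
    ‖y1 β1 β2 x‖ ^ 2 + ‖y2 β2 x‖ ^ 2 ≤ c * ‖x‖ ^ 2 ∧
    ‖x‖ ^ 2 ≤ c * (‖y1 β1 β2 x‖ ^ 2 + ‖y2 β2 x‖ ^ 2) := by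
  have hβn : 0 < ‖β2‖ := norm_pos_iff.2 hβ
  set A : ℝ := 2 / ‖β2‖ + ‖β1‖ * 2 / ‖β2‖ ^ 2 with hA
  set B : ℝ := ‖β1‖ + ‖β2‖ with hB
  have hA0 : 0 < A := by positivity
  have hB0 : 0 < B := by positivity
  refine ⟨2 * A ^ 2 + 2 * B ^ 2, by positivity, ?_⟩
  intro x
  have hn := norm_nonneg x
  have hxi : ∀ i, |x i| ≤ ‖x‖ := fun i => norm_le_pi_norm x i
  have hz1 : ‖(⟨x 0, x 1⟩ : ℂ)‖ ≤ 2 * ‖x‖ := (norm_mk_le _ _).trans (by linarith [hxi 0, hxi 1])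
  have hz2 : ‖(⟨x 2, x 3⟩ : ℂ)‖ ≤ 2 * ‖x‖ := (norm_mk_le _ _).trans (by linarith [hxi 2, hxi 3])
  constructor
  · have e2 : ‖y2 β2 x‖ ≤ A * ‖x‖ := by
      unfold y2
      rw [norm_div]
      have : ‖(⟨x 2, x 3⟩ : ℂ)‖ / ‖β2‖ ≤ 2 * ‖x‖ / ‖β2‖ := by gcongr
      have h0 : 0 ≤ ‖β1‖ * 2 / ‖β2‖ ^ 2 * ‖x‖ := by positivity
      have : 2 * ‖x‖ / ‖β2‖ = 2 / ‖β2‖ * ‖x‖ := by ring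
      rw [hA]; linarith
    have e1 : ‖y1 β1 β2 x‖ ≤ A * ‖x‖ := by
      unfold y1
      refine (norm_sub_le _ _).trans ?_
      rw [norm_div, norm_div, norm_mul, norm_pow]
      have a1 : ‖(⟨x 0, x 1⟩ : ℂ)‖ / ‖β2‖ ≤ 2 * ‖x‖ / ‖β2‖ := by gcongr
      have a2 : ‖β1‖ * ‖(⟨x 2, x 3⟩ : ℂ)‖ / ‖β2‖ ^ 2 ≤ ‖β1‖ * (2 * ‖x‖) / ‖β2‖ ^ 2 := by gcongr
      have : 2 * ‖x‖ / ‖β2‖ + ‖β1‖ * (2 * ‖x‖) / ‖β2‖ ^ 2 = A * ‖x‖ := by rw [hA]; ring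
      linarith
    have f1 := pow_le_pow_left₀ (norm_nonneg _) e1 2
    have f2 := pow_le_pow_left₀ (norm_nonneg _) e2 2
    have f3 : 0 ≤ 2 * B ^ 2 * ‖x‖ ^ 2 := by positivity
    linarith
  · set N := ‖y1 β1 β2 x‖ ^ 2 + ‖y2 β2 x‖ ^ 2 with hN
    set m := ‖y1 β1 β2 x‖ + ‖y2 β2 x‖ with hm
    have hm0 : 0 ≤ m := by positivity
    have hmN : m ^ 2 ≤ 2 * N := by
      rw [hm, hN]; nlinarith [sq_nonneg (‖y1 β1 β2 x‖ - ‖y2 β2 x‖)]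
    have e2 : (⟨x 2, x 3⟩ : ℂ) = β2 * y2 β2 x := by unfold y2; field_simp
    have e1 : (⟨x 0, x 1⟩ : ℂ) = β2 * y1 β1 β2 x + β1 * y2 β2 x := by
      unfold y1 y2; field_simp; ring
    have n1 := norm_nonneg (y1 β1 β2 x)
    have n2 := norm_nonneg (y2 β2 x)
    have n3 := norm_nonneg β1
    have b2 : ‖(⟨x 2, x 3⟩ : ℂ)‖ ≤ B * m := by
      rw [e2, norm_mul, hB, hm]; nlinarith [mul_nonneg n3 n1, mul_nonneg n3 n2, mul_nonneg hβn.le n1]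
    have b1 : ‖(⟨x 0, x 1⟩ : ℂ)‖ ≤ B * m := by
      rw [e1]
      refine (norm_add_le _ _).trans ?_
      rw [norm_mul, norm_mul, hB, hm]
      nlinarith [mul_nonneg n3 n1, mul_nonneg hβn.le n2]
    have hle : ‖x‖ ≤ B * m := by
      rw [pi_norm_le_iff_of_nonneg (by positivity)]
      intro i
      fin_cases i
      · exact (Complex.abs_re_le_norm ⟨x 0, x 1⟩).trans b1
      · exact (Complex.abs_im_le_norm ⟨x 0, x 1⟩).trans b1
      · exact (Complex.abs_re_le_norm ⟨x 2, x 3⟩).trans b2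
      · exact (Complex.abs_im_le_norm ⟨x 2, x 3⟩).trans b2
    have f1 := pow_le_pow_left₀ hn hle 2
    have f2 : B ^ 2 * m ^ 2 ≤ B ^ 2 * (2 * N) := mul_le_mul_of_nonneg_left hmN (by positivity)
    have f3 : 0 ≤ 2 * A ^ 2 * N := by positivity
    nlinarith

/-- The saturated complex double integrator `ẋ = J₂(ω)x - b σ(Kᵀx)` with `(J₂(ω), b)`
controllable admits a stabilizing linear feedback. -/
theorem stmt0 (ω : ℝ) (hω : 0 < ω) (b : Fin 4 → ℝ) (hctrl : Controllable (J2mat ω) b)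
    (σ : ℝ → ℝ) (hσ : IsSaturation σ) :
    ∃ K : Fin 4 → ℝ,
      IsGAS (fun _ x => (J2mat ω).mulVec x - σ (∑ i, K i * x i) • b) := by
  obtain ⟨L, hs⟩ := sat_of_isSaturation hσ
  have hb := beta_ne hctrl
  obtain ⟨κ, hκ, hst, hat⟩ := core hs hω
  obtain ⟨c, hc, hne⟩ := norm_equiv ⟨b 0, b 1⟩ ⟨b 2, b 3⟩ hb
  have hNN : ∀ (t₀ : ℝ) (x : ℝ → Fin 4 → ℝ) (t : ℝ), t₀ ≤ t →
      NN (fun t => (starRingEnd ℂ) (E ω t) * y1 ⟨b 0, b 1⟩ ⟨b 2, b 3⟩ (x (max t t₀)))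
        (fun t => (starRingEnd ℂ) (E ω t) * y2 ⟨b 2, b 3⟩ (x (max t t₀))) t
      = ‖y1 ⟨b 0, b 1⟩ ⟨b 2, b 3⟩ (x t)‖ ^ 2 + ‖y2 ⟨b 2, b 3⟩ (x t)‖ ^ 2 := by
    intro t₀ x t ht
    unfold NN
    rw [conj_E_norm_mul, conj_E_norm_mul, max_eq_left ht]
  refine ⟨Kvec κ ⟨b 0, b 1⟩ ⟨b 2, b 3⟩, ?_, ?_⟩
  · intro δ hδ
    obtain ⟨η, hη, h⟩ := hst (δ ^ 2 / c) (by positivity)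
    refine ⟨Real.sqrt (η / c), Real.sqrt_pos.2 (by positivity), ?_⟩
    intro t₀ _ x hx h0 t ht
    have hsol := sol_of hb t₀ x hx
    have h1 := h t₀ _ _ hsol (by
      rw [hNN t₀ x t₀ le_rfl]
      refine (hne (x t₀)).1.trans ?_
      have := pow_le_pow_left₀ (norm_nonneg _) h0 2
      rw [Real.sq_sqrt (by positivity), le_div_iff₀ hc] at this
      linarith) t ht
    rw [hNN t₀ x t ht, le_div_iff₀ hc] at h1
    have h2 := (hne (x t)).2
    exact le_of_sq_le_sq (by linarith) hδ.le
  · intro t₀ _ x hx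
    have hsol := sol_of hb t₀ x hx
    have h1 := (hat t₀ _ _ hsol).const_mul c
    rw [mul_zero] at h1
    have h2 : Tendsto (fun t => ‖x t‖ ^ 2) atTop (nhds 0) := by
      refine tendsto_of_tendsto_of_tendsto_of_le_of_le' tendsto_const_nhds h1
        (Eventually.of_forall fun t => by positivity) ?_
      filter_upwards [eventually_ge_atTop t₀] with t ht
      rw [hNN t₀ x t ht]
      exact (hne (x t)).2
    have h3 : Tendsto (fun t => Real.sqrt (‖x t‖ ^ 2)) atTop (nhds (Real.sqrt 0)) :=
      (Real.continuous_sqrt.tendsto 0).comp h2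
    rw [Real.sqrt_zero] at h3
    rw [tendsto_zero_iff_norm_tendsto_zero]
    refine h3.congr fun t => Real.sqrt_sq (norm_nonneg _)
end
end

section
/- Let ω>0 and b∈ℝ⁴ be such that the pair (J₂(ω),b) is controllable. Then there exists an invertible matrix P∈M₄(ℝ) such that (2π/ω)·P·J₂(ω)·P⁻¹ = J₂(2π) and P·b = (0,0,0,1)ᵀ. -/
open Real Filter

noncomputable section

/-- Normal form: a controllable pair `(J₂(ω), b)` can be brought, by an invertible change
of variable and time rescaling, to `(J₂(2π), e₄)`. -/
theorem stmt1 (ω : ℝ) (hω : 0 < ω) (b : Fin 4 → ℝ) (hctrl : Controllable (J2mat ω) b) :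
    ∃ P : Matrix (Fin 4) (Fin 4) ℝ, IsUnit P.det ∧
      (2 * Real.pi / ω) • (P * J2mat ω * P⁻¹) = J2mat (2 * Real.pi) ∧
      P.mulVec b = ![0, 0, 0, 1] := by
  have hv : b 2 ^ 2 + b 3 ^ 2 ≠ 0 := by
    intro h
    have h2 : b 2 = 0 := by nlinarith [sq_nonneg (b 2), sq_nonneg (b 3)]
    have h3 : b 3 = 0 := by nlinarith [sq_nonneg (b 2), sq_nonneg (b 3)]
    have hle : Submodule.span ℝ {b, (J2mat ω).mulVec b, (J2mat ω * J2mat ω).mulVec b,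
        (J2mat ω * J2mat ω * J2mat ω).mulVec b} ≤
        LinearMap.ker (LinearMap.proj (R := ℝ) (φ := fun _ : Fin 4 => ℝ) 2) := by
      rw [Submodule.span_le]
      rintro x (rfl | rfl | rfl | rfl) <;>
        simp [J2mat, Matrix.mulVec, dotProduct, Fin.sum_univ_four, Matrix.mul_apply, h2, h3]
    unfold Controllable at hctrl
    rw [hctrl] at hle
    have := hle (Submodule.mem_top (x := fun _ => (1 : ℝ)))
    simp at this
  have hpi := Real.pi_pos
  obtain ⟨k, hk⟩ : ∃ k, k = 2 * Real.pi / ω := ⟨_, rfl⟩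
  have hk0 : 0 < k := by rw [hk]; positivity
  have hkw : 2 * Real.pi = k * ω := by rw [hk]; field_simp
  rw [← hk, hkw]
  obtain ⟨n, hn⟩ : ∃ n, n = b 2 ^ 2 + b 3 ^ 2 := ⟨_, rfl⟩
  rw [← hn] at hv
  obtain ⟨p, hp⟩ : ∃ p, p = b 3 / n / k := ⟨_, rfl⟩
  obtain ⟨s, hs⟩ : ∃ s, s = b 2 / n / k := ⟨_, rfl⟩
  -- `u * conj v / n = c + i d`
  obtain ⟨c, hc⟩ : ∃ c, c = (b 0 * b 2 + b 1 * b 3) / n := ⟨_, rfl⟩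
  obtain ⟨d, hd⟩ : ∃ d, d = (b 1 * b 2 - b 0 * b 3) / n := ⟨_, rfl⟩
  have e0 : c * b 2 - d * b 3 = b 0 := by
    rw [hc, hd]; field_simp; rw [hn]; ring
  have e1 : c * b 3 + d * b 2 = b 1 := by
    rw [hc, hd]; field_simp; rw [hn]; ring
  have e2 : k * (p * b 2 - s * b 3) = 0 := by
    rw [hp, hs]; field_simp; ring
  have e3 : k * (p * b 3 + s * b 2) = 1 := by
    rw [hp, hs]; field_simp; rw [hn]; ring
  have hps : p ^ 2 + s ^ 2 ≠ 0 := by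
    intro h
    have h2 : p = 0 := by nlinarith [sq_nonneg p, sq_nonneg s]
    have h3 : s = 0 := by nlinarith [sq_nonneg p, sq_nonneg s]
    rw [h2, h3] at e3
    simp at e3
  let P : Matrix (Fin 4) (Fin 4) ℝ :=
    !![p, -s, -(p * c - s * d), p * d + s * c;
       s, p, -(p * d + s * c), -(p * c - s * d);
       0, 0, k * p, -(k * s);
       0, 0, k * s, k * p]
  have hdet : P.det = k ^ 2 * (p ^ 2 + s ^ 2) ^ 2 := by
    simp [P, Matrix.det_succ_row_zero, Fin.sum_univ_succ, Fin.succAbove]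
    ring
  have hu : IsUnit P.det := by
    rw [hdet, isUnit_iff_ne_zero]
    positivity
  refine ⟨P, hu, ?_, ?_⟩
  · have hcomm : k • (P * J2mat ω) = J2mat (k * ω) * P := by
      ext i j
      fin_cases i <;> fin_cases j <;>
        simp [P, J2mat, Matrix.mul_apply, Fin.sum_univ_four] <;> ring
    rw [← Matrix.smul_mul, hcomm, Matrix.mul_assoc, Matrix.mul_nonsing_inv _ hu, Matrix.mul_one]
  · ext i
    fin_cases i <;> simp [P, Matrix.mulVec, dotProduct, Fin.sum_univ_four]
    · linear_combination -p * e0 + s * e1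
    · linear_combination -s * e0 - p * e1
    · linear_combination e2
    · linear_combination e3
end
end
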